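/- (Theorem 26) Let 0 < θ₀ < θ₁ < 1, 0 < θ < 1, 0 < r, r₀, r₁, q₀, q₁ ≤ ∞, a, a₀, a₁, b₀, b₁ ∈ SV, ‖s^{-1/r₀} b₀(s)/a₀(s)‖_{r₀,(1,∞)} < ∞, and ‖s^{-1/r₁} b₁(s)/a₁(s)‖_{r₁,(0,1)} < ∞. Put c₀(t) = a₀(t) ‖s^{-1/r₀} b₀(s)/a₀(s)‖_{r₀,(t,∞)}, c₁(t) = a₁(t) ‖s^{-1/r₁} b₁(s)/a₁(s)‖_{r₁,(0,t)}, and ρ(t) = t^{θ₁-θ₀} c₀(t)/c₁(t). Then (Ā^𝓛_{θ₀,r₀,b₀,q₀,a₀}, Ā^𝓡_{θ₁,r₁,b₁,q₁,a₁})_{θ,r;a} ≅ Ā_{η,r;a^#}, where η = (1-θ)θ₀ + θθ₁ and a^#(t) = c₀(t)^{1-θ} c₁(t)^θ a(ρ(t)). -/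

import Mathlib

open MeasureTheory Set ENNReal Filter

noncomputable section

/-- The `L_q` quasi-norm (with respect to Lebesgue measure) of an `ℝ≥0∞`-valued
function over a set of reals; for `q = ∞` it is the essential supremum. -/
def LqNorm (q : ℝ≥0∞) (s : Set ℝ) (g : ℝ → ℝ≥0∞) : ℝ≥0∞ :=
  if q = ∞ then essSup g (volume.restrict s)
  else (∫⁻ t in s, g t ^ q.toReal) ^ q⁻¹.toReal

/-- The weight `s ↦ s ^ (-1/r) * b s`, as an `ℝ≥0∞`-valued function
(`1/∞ = 0` by convention). -/
def svWgt (r : ℝ≥0∞) (b : ℝ → ℝ) : ℝ → ℝ≥0∞ :=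
  fun s => ENNReal.ofReal (s ^ (-(r⁻¹.toReal)) * b s)

/-- `f` and `g` are equivalent on `s`: each is bounded by a constant multiple
of the other there. -/
def EquivOn (s : Set ℝ) (f g : ℝ → ℝ) : Prop :=
  ∃ C : ℝ, 0 < C ∧ ∀ t ∈ s, C⁻¹ * g t ≤ f t ∧ f t ≤ C * g t

/-- A positive measurable function `b` on `(0,∞)` is slowly varying if for every
`ε > 0`, `t ^ ε * b t` is equivalent to a non-decreasing function and
`t ^ (-ε) * b t` is equivalent to a non-increasing function. -/
def SlowlyVarying (b : ℝ → ℝ) : Prop :=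
  AEMeasurable b (volume.restrict (Ioi 0)) ∧ (∀ t ∈ Ioi (0:ℝ), 0 < b t) ∧
    ∀ ε : ℝ, 0 < ε →
      (∃ g : ℝ → ℝ, MonotoneOn g (Ioi 0) ∧ EquivOn (Ioi 0) (fun t => t ^ ε * b t) g) ∧
      (∃ g : ℝ → ℝ, AntitoneOn g (Ioi 0) ∧ EquivOn (Ioi 0) (fun t => t ^ (-ε) * b t) g)

/-- A quasi-Banach space continuously embedded into the ambient (Hausdorff) space `E`,
recorded via its extended-real-valued quasi-norm; the space itself is the set of
vectors of finite quasi-norm. -/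
structure QuasiBanach (E : Type*) [AddCommGroup E] [Module ℝ E] where
  N : E → ℝ≥0∞
  zero : N 0 = 0
  definite : ∀ x, N x = 0 → x = 0
  smul : ∀ (c : ℝ) (x : E), N (c • x) = ENNReal.ofReal |c| * N x
  quasi : ∃ C : ℝ≥0∞, 1 ≤ C ∧ C ≠ ∞ ∧ ∀ x y, N (x + y) ≤ C * (N x + N y)
  complete : ∀ f : ℕ → E,
    (∀ ε : ℝ≥0∞, 0 < ε → ∃ M : ℕ, ∀ m ≥ M, ∀ n ≥ M, N (f m - f n) < ε) →
    (∀ n, N (f n) ≠ ∞) →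
    ∃ g : E, N g ≠ ∞ ∧ Tendsto (fun n => N (f n - g)) atTop (nhds 0)

variable {E : Type*} [AddCommGroup E] [Module ℝ E]

/-- The Peetre K-functional of the couple whose quasi-norms are `N₀`, `N₁`. -/
def Kf (N₀ N₁ : E → ℝ≥0∞) (t : ℝ) (f : E) : ℝ≥0∞ :=
  ⨅ g : E, N₀ g + ENNReal.ofReal t * N₁ (f - g)

/-- The quasi-norm of the real interpolation space `Ā_{θ,q;b}`. -/
def normK (N₀ N₁ : E → ℝ≥0∞) (θ : ℝ) (q : ℝ≥0∞) (b : ℝ → ℝ) (f : E) : ℝ≥0∞ :=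
  LqNorm q (Ioi 0) fun u =>
    ENNReal.ofReal (u ^ (-θ - q⁻¹.toReal) * b u) * Kf N₀ N₁ u f

/-- The quasi-norm of the limiting interpolation space `Ā^𝓛_{σ,r,b,q,a}`. -/
def normL (N₀ N₁ : E → ℝ≥0∞) (σ : ℝ) (r q : ℝ≥0∞) (b a : ℝ → ℝ) (f : E) : ℝ≥0∞ :=
  LqNorm r (Ioi 0) fun t =>
    ENNReal.ofReal (t ^ (-(r⁻¹.toReal)) * (b t / a t)) *
      LqNorm q (Ioo 0 t) fun u =>
        ENNReal.ofReal (u ^ (-σ - q⁻¹.toReal) * a u) * Kf N₀ N₁ u f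

/-- The quasi-norm of the limiting interpolation space `Ā^𝓡_{σ,r,b,q,a}`. -/
def normR (N₀ N₁ : E → ℝ≥0∞) (σ : ℝ) (r q : ℝ≥0∞) (b a : ℝ → ℝ) (f : E) : ℝ≥0∞ :=
  LqNorm r (Ioi 0) fun t =>
    ENNReal.ofReal (t ^ (-(r⁻¹.toReal)) * (b t / a t)) *
      LqNorm q (Ioi t) fun u =>
        ENNReal.ofReal (u ^ (-σ - q⁻¹.toReal) * a u) * Kf N₀ N₁ u f

/-- Two (extended-real-valued) quasi-norms define the same space with
equivalent quasi-norms. -/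
def EquivNorms (nX nY : E → ℝ≥0∞) : Prop :=
  ∃ C : ℝ≥0∞, 0 < C ∧ C ≠ ∞ ∧ ∀ f : E, C⁻¹ * nY f ≤ nX f ∧ nX f ≤ C * nY f

/-! ### Regularly varying functions -/

/-- `max (t/s) (s/t)`, the multiplicative distance. -/
def Rt (s t : ℝ) : ℝ := max (t / s) (s / t)

lemma one_le_Rt {s t : ℝ} (hs : 0 < s) (ht : 0 < t) : 1 ≤ Rt s t := by
  unfold Rt
  rcases le_total s t with h | h
  · exact le_max_of_le_left ((one_le_div hs).2 h)
  · exact le_max_of_le_right ((one_le_div ht).2 h)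

lemma Rt_pos {s t : ℝ} (hs : 0 < s) (ht : 0 < t) : 0 < Rt s t :=
  lt_of_lt_of_le one_pos (one_le_Rt hs ht)

lemma Rt_comm (s t : ℝ) : Rt s t = Rt t s := max_comm _ _

lemma Rt_of_le {s t : ℝ} (hs : 0 < s) (h : s ≤ t) : Rt s t = t / s := by
  unfold Rt
  apply max_eq_left
  rw [div_le_div_iff₀ (hs.trans_le h) hs]
  nlinarith

lemma Rt_of_ge {s t : ℝ} (ht : 0 < t) (h : t ≤ s) : Rt s t = s / t := by
  rw [Rt_comm]; exact Rt_of_le ht h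

/-- Regularly varying of index `κ` (in the sense of equivalences). -/
def RV (κ : ℝ) (w : ℝ → ℝ) : Prop :=
  (∀ t, 0 < t → 0 < w t) ∧ ∀ ε : ℝ, 0 < ε → ∃ C : ℝ, 0 < C ∧ ∀ s t, 0 < s → 0 < t →
    w t ≤ C * (t / s) ^ κ * Rt s t ^ ε * w s

lemma RV.of_sv {b : ℝ → ℝ} (h : SlowlyVarying b) : RV 0 b := by
  obtain ⟨-, hpos, h⟩ := h
  refine ⟨fun t ht => hpos t ht, fun ε hε => ?_⟩
  obtain ⟨⟨g, hg, C, hC, hCg⟩, ⟨g', hg', C', hC', hCg'⟩⟩ := h ε hε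
  refine ⟨max (C * C) (C' * C'), by positivity, fun s t hs ht => ?_⟩
  have hbs := hpos s hs
  rcases le_total s t with hst | hst
  · rw [Rt_of_le hs hst]
    have h1 := (hCg' t ht).2
    have h2 := hg' hs ht hst
    have h3 := (hCg' s hs).1
    have h4 : t ^ (-ε) * b t ≤ (C' * C') * (s ^ (-ε) * b s) := by
      have : g' s ≤ C' * (s ^ (-ε) * b s) := by
        rwa [inv_mul_le_iff₀ hC'] at h3
      calc _ ≤ C' * g' t := h1
        _ ≤ C' * g' s := by gcongr
        _ ≤ C' * (C' * (s ^ (-ε) * b s)) := by gcongr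
        _ = _ := by ring
    rw [Real.rpow_neg ht.le, Real.rpow_neg hs.le, inv_mul_le_iff₀ (by positivity)] at h4
    calc b t ≤ _ := h4
      _ = (C' * C') * (t / s) ^ (0:ℝ) * (t / s) ^ ε * b s := by
        rw [Real.rpow_zero, Real.div_rpow ht.le hs.le]; field_simp
      _ ≤ _ := by gcongr; exact le_max_right _ _
  · rw [Rt_of_ge ht hst]
    have h1 := (hCg t ht).2
    have h2 := hg ht hs hst
    have h3 := (hCg s hs).1
    have h4 : t ^ ε * b t ≤ (C * C) * (s ^ ε * b s) := by
      have : g s ≤ C * (s ^ ε * b s) := by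
        rwa [inv_mul_le_iff₀ hC] at h3
      calc _ ≤ C * g t := h1
        _ ≤ C * g s := by gcongr
        _ ≤ C * (C * (s ^ ε * b s)) := by gcongr
        _ = _ := by ring
    rw [mul_comm, ← le_div_iff₀ (by positivity)] at h4
    calc b t ≤ _ := h4
      _ = (C * C) * (t / s) ^ (0:ℝ) * (s / t) ^ ε * b s := by
        rw [Real.rpow_zero, Real.div_rpow hs.le ht.le]; field_simp
      _ ≤ _ := by gcongr; exact le_max_left _ _

lemma RV.pos {κ : ℝ} {w : ℝ → ℝ} (h : RV κ w) {t : ℝ} (ht : 0 < t) : 0 < w t := h.1 t ht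

lemma RV.congr {κ : ℝ} {w w' : ℝ → ℝ} (h : RV κ w) (hw : ∀ t, 0 < t → w' t = w t) : RV κ w' := by
  refine ⟨fun t ht => by rw [hw t ht]; exact h.1 t ht, fun ε hε => ?_⟩
  obtain ⟨C, hC, H⟩ := h.2 ε hε
  exact ⟨C, hC, fun s t hs ht => by rw [hw t ht, hw s hs]; exact H s t hs ht⟩

lemma RV.cast {κ κ' : ℝ} {w : ℝ → ℝ} (h : RV κ w) (hk : κ = κ') : RV κ' w := hk ▸ h

lemma RV.power (κ : ℝ) : RV κ (fun t => t ^ κ) := by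
  refine ⟨fun t ht => by positivity, fun ε hε => ⟨1, one_pos, fun s t hs ht => ?_⟩⟩
  have := Real.one_le_rpow (one_le_Rt hs ht) hε.le
  calc t ^ κ = (1 * (t / s) ^ κ) * 1 * s ^ κ := by
        rw [Real.div_rpow ht.le hs.le]; field_simp
    _ ≤ _ := by gcongr

lemma RV.mul {κ κ' : ℝ} {w w' : ℝ → ℝ} (h : RV κ w) (h' : RV κ' w') :
    RV (κ + κ') (fun t => w t * w' t) := by
  refine ⟨fun t ht => mul_pos (h.1 t ht) (h'.1 t ht), fun ε hε => ?_⟩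
  obtain ⟨C, hC, H⟩ := h.2 (ε/2) (by positivity)
  obtain ⟨C', hC', H'⟩ := h'.2 (ε/2) (by positivity)
  refine ⟨C * C', by positivity, fun s t hs ht => ?_⟩
  have hR := Rt_pos hs ht
  have := h.1 s hs
  have := h'.1 s hs
  calc w t * w' t ≤ (C * (t / s) ^ κ * Rt s t ^ (ε/2) * w s) *
        (C' * (t / s) ^ κ' * Rt s t ^ (ε/2) * w' s) := by
        gcongr
        · exact (h'.1 t ht).le
        · exact H s t hs ht
        · exact H' s t hs ht
    _ = C * C' * ((t / s) ^ κ * (t / s) ^ κ') * (Rt s t ^ (ε/2) * Rt s t ^ (ε/2)) *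
        (w s * w' s) := by ring
    _ = _ := by
      rw [← Real.rpow_add (by positivity), ← Real.rpow_add hR]; ring_nf

lemma RV.inv {κ : ℝ} {w : ℝ → ℝ} (h : RV κ w) : RV (-κ) (fun t => (w t)⁻¹) := by
  refine ⟨fun t ht => inv_pos.2 (h.1 t ht), fun ε hε => ?_⟩
  obtain ⟨C, hC, H⟩ := h.2 ε hε
  refine ⟨C, hC, fun s t hs ht => ?_⟩
  have h1 := h.1 s hs
  have h2 := h.1 t ht
  have := H t s ht hs
  rw [Rt_comm] at this
  have e : (s / t) ^ κ = (t / s) ^ (-κ) := by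
    rw [Real.rpow_neg (by positivity), ← Real.inv_rpow (by positivity), inv_div]
  rw [e] at this
  change (w t)⁻¹ ≤ _ * (w s)⁻¹
  rw [← div_eq_mul_inv, inv_eq_one_div, div_le_div_iff₀ h2 h1]
  linarith

lemma RV.rpow_nonneg {κ : ℝ} {w : ℝ → ℝ} (h : RV κ w) {p : ℝ} (hp : 0 < p) :
    RV (p * κ) (fun t => w t ^ p) := by
  refine ⟨fun t ht => Real.rpow_pos_of_pos (h.1 t ht) _, fun ε hε => ?_⟩
  obtain ⟨C, hC, H⟩ := h.2 (ε / p) (by positivity)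
  refine ⟨C ^ p, by positivity, fun s t hs ht => ?_⟩
  have h1 := h.1 s hs
  have h2 := h.1 t ht
  have hR := Rt_pos hs ht
  calc w t ^ p ≤ (C * (t / s) ^ κ * Rt s t ^ (ε/p) * w s) ^ p := by
        gcongr; exact H s t hs ht
    _ = _ := by
      rw [Real.mul_rpow (by positivity) h1.le, Real.mul_rpow (by positivity) (by positivity),
        Real.mul_rpow (by positivity) (by positivity), ← Real.rpow_mul (by positivity),
        ← Real.rpow_mul hR.le, div_mul_cancel₀ _ hp.ne', mul_comm κ p]

lemma RV.div {κ κ' : ℝ} {w w' : ℝ → ℝ} (h : RV κ w) (h' : RV κ' w') :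
    RV (κ - κ') (fun t => w t / w' t) :=
  ((h.mul h'.inv).congr (fun t _ => div_eq_mul_inv _ _)).cast (by ring)

/-- crude two sided bound -/
lemma RV.crude {κ : ℝ} {w : ℝ → ℝ} (h : RV κ w) :
    ∃ C, 0 < C ∧ ∀ s t, 0 < s → 0 < t → w t ≤ C * Rt s t ^ (|κ| + 1) * w s := by
  obtain ⟨C, hC, H⟩ := h.2 1 one_pos
  refine ⟨C, hC, fun s t hs ht => (H s t hs ht).trans ?_⟩
  have h1 := h.1 s hs
  have hR := Rt_pos hs ht
  rw [Real.rpow_add hR, ← mul_assoc]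
  gcongr
  rcases le_total 0 κ with hk | hk
  · rw [abs_of_nonneg hk]
    exact Real.rpow_le_rpow (by positivity) (le_max_left _ _) hk
  · rw [abs_of_nonpos hk]
    have e : (t / s) ^ κ = (s / t) ^ (-κ) := by
      rw [Real.rpow_neg (by positivity), ← Real.inv_rpow (by positivity), inv_div]
    rw [e]
    exact Real.rpow_le_rpow (by positivity) (le_max_right _ _) (by linarith)

/-- composition of a slowly varying function with a regularly varying one -/
lemma RV.comp {κ : ℝ} {w ρ : ℝ → ℝ} (h : RV 0 w) (hρ : RV κ ρ) : RV 0 (fun t => w (ρ t)) := by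
  refine ⟨fun t ht => h.1 _ (hρ.1 t ht), fun ε hε => ?_⟩
  obtain ⟨C, hC, H⟩ := hρ.crude
  have hk : 0 < |κ| + 1 := by positivity
  obtain ⟨C', hC', H'⟩ := h.2 (ε / (|κ| + 1)) (by positivity)
  refine ⟨C' * C ^ (ε / (|κ| + 1)), by positivity, fun s t hs ht => ?_⟩
  have h1 := hρ.1 s hs
  have h2 := hρ.1 t ht
  have hR := Rt_pos hs ht
  have hR' := Rt_pos h1 h2
  have h3 := h.1 _ h1
  have key : Rt (ρ s) (ρ t) ≤ C * Rt s t ^ (|κ| + 1) := by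
    apply max_le
    · rw [div_le_iff₀ h1]; exact H s t hs ht
    · rw [div_le_iff₀ h2, Rt_comm]; exact H t s ht hs
  calc w (ρ t) ≤ _ := H' (ρ s) (ρ t) h1 h2
    _ ≤ C' * 1 * (C * Rt s t ^ (|κ| + 1)) ^ (ε / (|κ| + 1)) * w (ρ s) := by
      rw [Real.rpow_zero]; gcongr
    _ = _ := by
      rw [Real.mul_rpow (by positivity) (by positivity), ← Real.rpow_mul hR.le,
        mul_div_cancel₀ _ hk.ne', Real.rpow_zero]; ring

/-- doubling -/
lemma RV.doubling {κ : ℝ} {w : ℝ → ℝ} (h : RV κ w) (A : ℝ) (hA : 0 < A) :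
    ∃ D, 0 < D ∧ ∀ s t, 0 < s → 0 < t → t ≤ A * s → s ≤ A * t → w t ≤ D * w s := by
  obtain ⟨C, hC, H⟩ := h.crude
  refine ⟨C * A ^ (|κ| + 1), by positivity, fun s t hs ht h1 h2 => (H s t hs ht).trans ?_⟩
  have := h.1 s hs
  have hR := Rt_pos hs ht
  gcongr
  exact max_le ((div_le_iff₀ hs).2 h1) ((div_le_iff₀ ht).2 h2)

/-! ### The norm `L_q(du/u)` -/

/-- `L_q` norm with respect to `du/u`. -/
def Lst (q : ℝ≥0∞) (S : Set ℝ) (h : ℝ → ℝ≥0∞) : ℝ≥0∞ :=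
  LqNorm q S (fun u => ENNReal.ofReal (u ^ (-(q⁻¹.toReal))) * h u)

lemma Lst_top (S : Set ℝ) (h : ℝ → ℝ≥0∞) : Lst ∞ S h = essSup h (volume.restrict S) := by
  simp [Lst, LqNorm]

lemma Lst_fin {q : ℝ≥0∞} (hq : 0 < q) (hq' : q ≠ ∞) {S : Set ℝ} (hS : MeasurableSet S)
    (hS0 : S ⊆ Ioi 0) (h : ℝ → ℝ≥0∞) :
    Lst q S h = (∫⁻ u in S, ENNReal.ofReal (u⁻¹) * h u ^ q.toReal) ^ (q.toReal)⁻¹ := by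
  have hp : 0 < q.toReal := ENNReal.toReal_pos hq.ne' hq'
  rw [Lst, LqNorm, if_neg hq', ENNReal.toReal_inv]
  congr 1
  apply setLIntegral_congr_fun hS
  intro u hu
  have hu0 : 0 < u := hS0 hu
  simp only
  rw [ENNReal.mul_rpow_of_nonneg _ _ hp.le, ENNReal.ofReal_rpow_of_nonneg (by positivity) hp.le,
    ← Real.rpow_mul hu0.le, neg_mul, inv_mul_cancel₀ hp.ne', Real.rpow_neg_one]

lemma Lst_congr {q : ℝ≥0∞} {S : Set ℝ} (hS : MeasurableSet S) {h h' : ℝ → ℝ≥0∞}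
    (H : ∀ u ∈ S, h u = h' u) : Lst q S h = Lst q S h' := by
  unfold Lst LqNorm
  split_ifs
  · apply essSup_congr_ae
    filter_upwards [ae_restrict_mem hS] with u hu
    rw [H u hu]
  · congr 1
    apply setLIntegral_congr_fun hS
    intro u hu
    simp only [H u hu]

lemma Lst_mono {q : ℝ≥0∞} {S : Set ℝ} (hS : MeasurableSet S) {h h' : ℝ → ℝ≥0∞}
    (H : ∀ u ∈ S, h u ≤ h' u) : Lst q S h ≤ Lst q S h' := by
  unfold Lst LqNorm
  split_ifs
  · refine essSup_mono_ae ?_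
    filter_upwards [ae_restrict_mem hS] with u hu
    gcongr
    exact H u hu
  · gcongr ?_ ^ _
    apply setLIntegral_mono' hS
    intro u hu
    simp only
    gcongr
    exact H u hu

lemma Lst_mono_set {q : ℝ≥0∞} {S T : Set ℝ} (h : ℝ → ℝ≥0∞) (H : S ⊆ T) :
    Lst q S h ≤ Lst q T h := by
  unfold Lst LqNorm
  split_ifs
  · exact essSup_mono_measure (Measure.restrict_mono H le_rfl).absolutelyContinuous
  · gcongr ?_ ^ _
    exact lintegral_mono_set H

lemma Lst_const_le {q : ℝ≥0∞} (hq : 0 < q) (S : Set ℝ) (c : ℝ≥0∞) (h : ℝ → ℝ≥0∞) :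
    c * Lst q S h ≤ Lst q S (fun u => c * h u) := by
  unfold Lst LqNorm
  split_ifs with hq'
  · rw [← ENNReal.essSup_const_mul]
    simp only [mul_left_comm]
    exact le_rfl
  · have hp : 0 < q.toReal := ENNReal.toReal_pos hq.ne' hq'
    have e : c = (c ^ q.toReal) ^ (q⁻¹.toReal) := by
      rw [ENNReal.toReal_inv, ← ENNReal.rpow_mul, mul_inv_cancel₀ hp.ne', ENNReal.rpow_one]
    conv_lhs => rw [e]
    rw [← ENNReal.mul_rpow_of_nonneg _ _ (by positivity)]
    gcongr ?_ ^ _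
    refine (lintegral_const_mul_le _ _).trans (le_of_eq ?_)
    congr 1
    ext u
    rw [← ENNReal.mul_rpow_of_nonneg _ _ hp.le]
    congr 1; ring

lemma Lst_const {q : ℝ≥0∞} (hq : 0 < q) (S : Set ℝ) {c : ℝ≥0∞} (hc : c ≠ ∞) (h : ℝ → ℝ≥0∞) :
    Lst q S (fun u => c * h u) = c * Lst q S h := by
  refine le_antisymm ?_ (Lst_const_le hq S c h)
  unfold Lst LqNorm
  split_ifs with hq'
  · rw [← ENNReal.essSup_const_mul]
    simp only [mul_left_comm]
    exact le_rfl
  · have hp : 0 < q.toReal := ENNReal.toReal_pos hq.ne' hq'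
    have e : c = (c ^ q.toReal) ^ (q⁻¹.toReal) := by
      rw [ENNReal.toReal_inv, ← ENNReal.rpow_mul, mul_inv_cancel₀ hp.ne', ENNReal.rpow_one]
    conv_rhs => rw [e]
    rw [← ENNReal.mul_rpow_of_nonneg _ _ (by positivity)]
    gcongr ?_ ^ _
    rw [← lintegral_const_mul' _ _ (ENNReal.rpow_ne_top_of_nonneg hp.le hc)]
    refine (le_of_eq ?_)
    congr 1
    ext u
    rw [← ENNReal.mul_rpow_of_nonneg _ _ hp.le]
    congr 1; ring

lemma ennreal_add_rpow_le (x y : ℝ≥0∞) {p : ℝ} (hp : 0 ≤ p) :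
    (x + y) ^ p ≤ 2 ^ p * (x ^ p + y ^ p) := by
  wlog h : x ≤ y with H
  · rw [add_comm x, add_comm (x ^ p)]; exact H y x hp (le_of_not_ge h)
  calc (x + y) ^ p ≤ (2 * y) ^ p := by gcongr; rw [two_mul]; gcongr
    _ = 2 ^ p * y ^ p := ENNReal.mul_rpow_of_nonneg _ _ hp
    _ ≤ _ := by gcongr; exact le_add_self

lemma Lst_union (q : ℝ≥0∞) : ∃ C : NNReal, ∀ (S T : Set ℝ) (h : ℝ → ℝ≥0∞),
    Lst q (S ∪ T) h ≤ C * (Lst q S h + Lst q T h) := by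
  refine ⟨max 1 (2 ^ q⁻¹.toReal), fun S T h => ?_⟩
  unfold Lst LqNorm
  split_ifs with hq'
  · refine le_trans ?_ (le_mul_of_one_le_left (zero_le) (by simp))
    refine essSup_le_of_ae_le _ ?_
    rw [Filter.EventuallyLE, ae_restrict_union_iff]
    constructor
    · filter_upwards [ENNReal.ae_le_essSup (μ := volume.restrict S) (fun u =>
        ENNReal.ofReal (u ^ (-(q⁻¹.toReal))) * h u)] with u hu
      exact hu.trans le_self_add
    · filter_upwards [ENNReal.ae_le_essSup (μ := volume.restrict T) (fun u =>
        ENNReal.ofReal (u ^ (-(q⁻¹.toReal))) * h u)] with u hu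
      exact hu.trans le_add_self
  · refine (ENNReal.rpow_le_rpow (lintegral_union_le _ _ _) (by positivity)).trans ?_
    refine (ennreal_add_rpow_le _ _ (by positivity)).trans ?_
    gcongr
    refine le_trans (le_of_eq ?_) (ENNReal.coe_le_coe.2 (le_max_right _ _))
    rw [ENNReal.coe_rpow_of_nonneg _ (by positivity)]; simp

/-- the two kinds of intervals -/
def Iv (e : Bool) (t : ℝ) : Set ℝ := if e then Ioo 0 t else Ioi t

/-- the sign attached to the interval -/
def sg (e : Bool) : ℝ := if e then 1 else -1

lemma Iv_meas (e : Bool) (t : ℝ) : MeasurableSet (Iv e t) := by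
  cases e <;> simp [Iv, measurableSet_Ioo, measurableSet_Ioi]

lemma Iv_pos (e : Bool) {t : ℝ} (ht : 0 < t) : Iv e t ⊆ Ioi 0 := by
  cases e
  · simp [Iv, ht.le]
  · simp only [Iv, if_true]; exact fun u hu => hu.1

lemma Iv_power (e : Bool) {q : ℝ≥0∞} (hq : 0 < q) {κ : ℝ} (hκ : 0 < sg e * κ) :
    ∃ C : NNReal, ∀ τ, 0 < τ → Lst q (Iv e τ) (fun u => ENNReal.ofReal ((u / τ) ^ κ)) ≤ C := by
  by_cases hq' : q = ∞
  · subst hq'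
    refine ⟨1, fun τ hτ => ?_⟩
    rw [Lst_top]
    refine essSup_le_of_ae_le _ ?_
    filter_upwards [ae_restrict_mem (Iv_meas e τ)] with u hu
    have hu0 : 0 < u := Iv_pos e hτ hu
    simp only [ENNReal.coe_one, ENNReal.ofReal_le_one]
    cases e
    · simp only [sg, Bool.false_eq_true, if_false] at hκ
      simp only [Iv, Bool.false_eq_true, if_false, mem_Ioi] at hu
      exact Real.rpow_le_one_of_one_le_of_nonpos ((one_le_div hτ).2 hu.le) (by linarith)
    · simp only [sg, if_true] at hκ
      simp only [Iv, if_true, mem_Ioo] at hu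
      exact Real.rpow_le_one (by positivity) ((div_le_one hτ).2 hu.2.le) (by linarith)
  · have hp : 0 < q.toReal := ENNReal.toReal_pos hq.ne' hq'
    set p := q.toReal with hpdef
    refine ⟨(1 / |κ * p|).toNNReal ^ p⁻¹, fun τ hτ => ?_⟩
    rw [Lst_fin hq hq' (Iv_meas e τ) (Iv_pos e hτ), ← hpdef,
      ENNReal.coe_rpow_of_nonneg _ (by positivity)]
    gcongr ?_ ^ _
    have e1 : ∀ u ∈ Iv e τ, ENNReal.ofReal (u⁻¹) * ENNReal.ofReal ((u / τ) ^ κ) ^ p =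
        ENNReal.ofReal (τ ^ (-(κ * p))) * ENNReal.ofReal (u ^ (κ * p - 1)) := by
      intro u hu
      have hu0 : 0 < u := Iv_pos e hτ hu
      rw [ENNReal.ofReal_rpow_of_nonneg (by positivity) hp.le, ← ENNReal.ofReal_mul (by positivity),
        ← ENNReal.ofReal_mul (by positivity), ← Real.rpow_mul (by positivity),
        Real.div_rpow hu0.le hτ.le, Real.rpow_neg hτ.le, Real.rpow_sub_one hu0.ne']
      congr 1; field_simp
    rw [setLIntegral_congr_fun (Iv_meas e τ) e1, lintegral_const_mul' _ _ ENNReal.ofReal_ne_top]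
    have key : ∫⁻ u in Iv e τ, ENNReal.ofReal (u ^ (κ * p - 1)) =
        ENNReal.ofReal (τ ^ (κ * p) / |κ * p|) := by
      have hnn : 0 ≤ᵐ[volume.restrict (Iv e τ)] fun u => u ^ (κ * p - 1) := by
        filter_upwards [ae_restrict_mem (Iv_meas e τ)] with u hu
        have hu0 : 0 < u := Iv_pos e hτ hu
        positivity
      cases e
      · simp only [sg, Bool.false_eq_true, if_false] at hκ
        have hkp : κ * p < 0 := mul_neg_of_neg_of_pos (by linarith) hp
        simp only [Iv, Bool.false_eq_true, if_false] at hnn ⊢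
        rw [← ofReal_integral_eq_lintegral_ofReal
          (integrableOn_Ioi_rpow_of_lt (by linarith) hτ) hnn,
          integral_Ioi_rpow_of_lt (by linarith) hτ, abs_of_neg hkp]
        congr 1
        rw [sub_add_cancel, neg_div, div_neg]
      · simp only [sg, if_true] at hκ
        have hkp : 0 < κ * p := mul_pos (by linarith) hp
        simp only [Iv, if_true] at hnn ⊢
        rw [← ofReal_integral_eq_lintegral_ofReal
          ((intervalIntegral.integrableOn_Ioo_rpow_iff hτ).2 (by linarith)) hnn,
          ← integral_Ioc_eq_integral_Ioo, ← intervalIntegral.integral_of_le hτ.le,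
          integral_rpow (Or.inl (by linarith)), abs_of_pos hkp, sub_add_cancel,
          Real.zero_rpow hkp.ne', sub_zero]
    rw [key, ← ENNReal.ofReal_mul (by positivity)]
    apply le_of_eq
    change _ = ENNReal.ofReal _
    congr 1
    rw [Real.rpow_neg hτ.le]
    have : 0 < τ ^ (κ * p) := by positivity
    field_simp

lemma Iv_RV (e : Bool) {q : ℝ≥0∞} (hq : 0 < q) {κ : ℝ} (hκ : 0 < sg e * κ) {w : ℝ → ℝ}
    (hw : RV κ w) : ∃ C : NNReal, ∀ τ, 0 < τ →
      Lst q (Iv e τ) (fun u => ENNReal.ofReal (w u)) ≤ C * ENNReal.ofReal (w τ) := by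
  obtain ⟨C, hC, H⟩ := hw.2 (|κ| / 2) (by
    have : κ ≠ 0 := by rintro rfl; simp at hκ
    positivity)
  obtain ⟨C', H'⟩ := Iv_power e hq (κ := κ / 2) (by linarith)
  refine ⟨C.toNNReal * C', fun τ hτ => ?_⟩
  have h1 : ∀ u ∈ Iv e τ, ENNReal.ofReal (w u) ≤
      ENNReal.ofReal (C * w τ) * ENNReal.ofReal ((u / τ) ^ (κ / 2)) := by
    intro u hu
    have hu0 : 0 < u := Iv_pos e hτ hu
    have hwt := hw.1 τ hτ
    rw [← ENNReal.ofReal_mul (by positivity)]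
    apply ENNReal.ofReal_le_ofReal
    refine (H τ u hτ hu0).trans (le_of_eq ?_)
    have : (u / τ) ^ κ * Rt τ u ^ (|κ| / 2) = (u / τ) ^ (κ / 2) := by
      cases e
      · simp only [sg, Bool.false_eq_true, if_false] at hκ
        simp only [Iv, Bool.false_eq_true, if_false, mem_Ioi] at hu
        rw [Rt_of_le hτ hu.le, abs_of_neg (by linarith), ← Real.rpow_add (by positivity)]
        congr 1; ring
      · simp only [sg, if_true] at hκ
        simp only [Iv, if_true, mem_Ioo] at hu
        rw [Rt_of_ge hu0 hu.2.le, abs_of_pos (by linarith), ← inv_div u τ,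
          Real.inv_rpow (by positivity), ← Real.rpow_neg (by positivity),
          ← Real.rpow_add (by positivity)]
        congr 1; ring
    rw [mul_assoc C, this]; ring
  refine (Lst_mono (Iv_meas e τ) h1).trans ?_
  rw [Lst_const hq _ ENNReal.ofReal_ne_top, ENNReal.ofReal_mul hC.le, ENNReal.coe_mul]
  calc _ ≤ ENNReal.ofReal C * ENNReal.ofReal (w τ) * C' := by gcongr; exact H' τ hτ
    _ = _ := by rw [mul_right_comm]; rfl

/-- lower bound: a function that is `≥ x` on `(t, 2t)` has norm `≥ c x`. -/
lemma Lst_lower {q : ℝ≥0∞} (hq : 0 < q) : ∃ C : NNReal, ∀ (S : Set ℝ) (h : ℝ → ℝ≥0∞) (t : ℝ)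
    (x : ℝ≥0∞), 0 < t → Ioo t (2 * t) ⊆ S → (∀ u ∈ Ioo t (2 * t), x ≤ h u) →
      x ≤ C * Lst q S h := by
  by_cases hq' : q = ∞
  · subst hq'
    refine ⟨1, fun S h t x ht hS hx => ?_⟩
    refine le_trans ?_ (mul_le_mul_right (Lst_mono_set h hS) _)
    rw [Lst_top, ENNReal.coe_one, one_mul]
    have hne : NeZero (volume.restrict (Ioo t (2 * t))) := by
      constructor
      rw [Ne, Measure.restrict_eq_zero, Real.volume_Ioo]
      simp only [ENNReal.ofReal_eq_zero, not_le]; linarith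
    have : ∀ᵐ u ∂(volume.restrict (Ioo t (2 * t))), x ≤ essSup h (volume.restrict (Ioo t (2 * t))) := by
      filter_upwards [ae_restrict_mem measurableSet_Ioo, ENNReal.ae_le_essSup h] with u hu hu'
      exact (hx u hu).trans hu'
    exact this.exists.choose_spec
  · have hp : 0 < q.toReal := ENNReal.toReal_pos hq.ne' hq'
    set p := q.toReal with hpdef
    refine ⟨2 ^ p⁻¹, fun S h t x ht hS hx => ?_⟩
    refine le_trans ?_ (mul_le_mul_right (Lst_mono_set h hS) _)
    rw [Lst_fin hq hq' measurableSet_Ioo (fun u hu => ht.trans hu.1), ← hpdef,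
      ENNReal.coe_rpow_of_nonneg _ (by positivity),
      ← ENNReal.mul_rpow_of_nonneg _ _ (by positivity)]
    have e : x = (x ^ p) ^ p⁻¹ := by
      rw [← ENNReal.rpow_mul, mul_inv_cancel₀ hp.ne', ENNReal.rpow_one]
    conv_lhs => rw [e]
    gcongr ?_ ^ _
    have h1 : ∫⁻ u in Ioo t (2 * t), ENNReal.ofReal ((2 * t)⁻¹) * x ^ p ≤
        ∫⁻ u in Ioo t (2 * t), ENNReal.ofReal (u⁻¹) * h u ^ p := by
      apply setLIntegral_mono' measurableSet_Ioo
      intro u hu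
      have hu0 : 0 < u := ht.trans hu.1
      gcongr
      · exact hu.2.le
      · exact hx u hu
    refine le_trans ?_ (mul_le_mul_right h1 _)
    rw [setLIntegral_const, Real.volume_Ioo, mul_right_comm, ← ENNReal.ofReal_mul (by positivity)]
    have : ((2:NNReal):ℝ≥0∞) = ENNReal.ofReal 2 := by simp
    rw [this, ← mul_assoc, ← ENNReal.ofReal_mul (by positivity)]
    have : 2 * ((2 * t)⁻¹ * (2 * t - t)) = 1 := by field_simp; ring
    rw [this, ENNReal.ofReal_one, one_mul]

lemma Iv_lower (e : Bool) {q : ℝ≥0∞} (hq : 0 < q) : ∃ C : NNReal, ∀ (h : ℝ → ℝ≥0∞) (t : ℝ)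
    (x : ℝ≥0∞), 0 < t → (∀ u, 0 < u → u ≤ 2 * t → t ≤ 2 * u → x ≤ h u) →
      x ≤ C * Lst q (Iv e t) h := by
  obtain ⟨C, H⟩ := Lst_lower hq
  refine ⟨C, fun h t x ht hx => ?_⟩
  cases e
  · refine H _ h t x ht ?_ ?_
    · simp only [Iv, Bool.false_eq_true, if_false]; exact fun u hu => hu.1
    · exact fun u hu => hx u (ht.trans hu.1) hu.2.le (by linarith [hu.1])
  · refine H _ h (t/2) x (by positivity) ?_ ?_
    · simp only [Iv, if_true]
      exact fun u hu => ⟨by linarith [hu.1], by linarith [hu.2]⟩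
    · exact fun u hu => hx u (by linarith [hu.1]) (by linarith [hu.2]) (by linarith [hu.1])

/-! ### The generic limiting space -/

lemma Lst_insert (q : ℝ≥0∞) (t : ℝ) (S : Set ℝ) (h : ℝ → ℝ≥0∞) :
    Lst q (insert t S) h = Lst q S h := by
  unfold Lst LqNorm
  rw [Measure.restrict_congr_set (insert_ae_eq_self t S)]

lemma sg_not (e : Bool) : sg (!e) = - sg e := by cases e <;> simp [sg]

lemma Iv_tri (e : Bool) {s t : ℝ} (hs : 0 < s) : s ∈ Iv e t ∨ s = t ∨ s ∈ Iv (!e) t := by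
  cases e <;> simp only [Iv, Bool.not_true, Bool.not_false, Bool.false_eq_true, if_true, if_false,
    mem_Ioi, mem_Ioo, hs, true_and]
  · rcases lt_trichotomy s t with h | h | h <;> simp [h]
  · rcases lt_trichotomy s t with h | h | h <;> simp [h]

lemma Iv_sub (e : Bool) {s t : ℝ} (h : s ∈ Iv e t) : Iv e s ⊆ Iv e t := by
  cases e <;> simp only [Iv, Bool.false_eq_true, if_true, if_false, mem_Ioi, mem_Ioo] at *
  · exact Ioi_subset_Ioi h.le
  · exact Ioo_subset_Ioo le_rfl h.2.le

lemma Iv_symm (e : Bool) {s t : ℝ} (ht : 0 < t) (h : s ∈ Iv e t) : t ∈ Iv (!e) s := by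
  cases e <;> simp only [Iv, Bool.not_true, Bool.not_false, Bool.false_eq_true, if_true, if_false,
    mem_Ioi, mem_Ioo] at *
  · exact ⟨ht, h⟩
  · exact h.2

lemma Iv_cover (e : Bool) {t : ℝ} : Ioi 0 ⊆ insert t (Iv e t ∪ Iv (!e) t) := by
  intro s hs
  rcases Iv_tri e (t := t) hs with h | h | h
  · exact Or.inr (Or.inl h)
  · exact Or.inl h
  · exact Or.inr (Or.inr h)

lemma Rt_Iv (e : Bool) {u t : ℝ} (ht : 0 < t) (hu : u ∈ Iv e t) (ε : ℝ) :
    Rt t u ^ ε = (u / t) ^ (-(sg e * ε)) := by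
  have hu0 : 0 < u := Iv_pos e ht hu
  cases e <;> simp only [Iv, sg, Bool.false_eq_true, if_true, if_false, mem_Ioi, mem_Ioo] at *
  · rw [Rt_of_le ht hu.le]; congr 1; ring
  · rw [Rt_of_ge hu0 hu.2.le, ← inv_div u t, Real.inv_rpow (by positivity),
      ← Real.rpow_neg (by positivity)]; congr 1; ring

/-- The tail norm. -/
def Bn (e : Bool) (r : ℝ≥0∞) (β : ℝ → ℝ) (t : ℝ) : ℝ≥0∞ :=
  Lst r (Iv (!e) t) (fun s => ENNReal.ofReal (β s))

lemma Bn_mono (e : Bool) {r : ℝ≥0∞} {β : ℝ → ℝ} {s t : ℝ} (h : s ∈ Iv (!e) t) :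
    Bn e r β s ≤ Bn e r β t := Lst_mono_set _ (Iv_sub _ h)

lemma Bn_lower (e : Bool) {r : ℝ≥0∞} (hr : 0 < r) {β : ℝ → ℝ} (hβ : RV 0 β) :
    ∃ C : NNReal, ∀ t, 0 < t → ENNReal.ofReal (β t) ≤ C * Bn e r β t := by
  obtain ⟨C, H⟩ := Iv_lower (!e) hr
  obtain ⟨D, hD, H'⟩ := hβ.doubling 2 two_pos
  refine ⟨C * D.toNNReal, fun t ht => ?_⟩
  have := H (fun u => ENNReal.ofReal D * ENNReal.ofReal (β u)) t (ENNReal.ofReal (β t)) ht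
    (fun u hu h1 h2 => by
      rw [← ENNReal.ofReal_mul hD.le]
      exact ENNReal.ofReal_le_ofReal (H' u t hu ht h2 h1))
  rw [Lst_const hr _ ENNReal.ofReal_ne_top, ← mul_assoc] at this
  rw [ENNReal.coe_mul]; exact this

lemma Bn_upper (e : Bool) {r : ℝ≥0∞} (hr : 0 < r) {β : ℝ → ℝ} (hβ : RV 0 β) {ε : ℝ} (hε : 0 < ε) :
    ∃ C : NNReal, ∀ s t, 0 < s → 0 < t →
      Bn e r β s ≤ C * ENNReal.ofReal (Rt t s ^ ε) * Bn e r β t := by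
  obtain ⟨C1, H1⟩ := Lst_union r
  obtain ⟨C2, H2⟩ := Bn_lower e hr hβ
  obtain ⟨C3, hC3, H3⟩ := hβ.2 ε hε
  obtain ⟨C4, H4⟩ := Iv_power (!e) hr (κ := -(sg e * ε)) (by
    rw [sg_not]; cases e <;> simp [sg, hε])
  refine ⟨max 1 (C1 * (C3.toNNReal * C2 * C4 + 1)), fun s t hs ht => ?_⟩
  have hR : 1 ≤ ENNReal.ofReal (Rt t s ^ ε) := by
    rw [ENNReal.one_le_ofReal]; exact Real.one_le_rpow (one_le_Rt ht hs) hε.le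
  have triv : Bn e r β s ≤ Bn e r β t → Bn e r β s ≤
      (max 1 (C1 * (C3.toNNReal * C2 * C4 + 1)) : NNReal) *
        ENNReal.ofReal (Rt t s ^ ε) * Bn e r β t := by
    intro h
    refine h.trans (le_mul_of_one_le_left (zero_le) ?_)
    refine le_trans hR (le_mul_of_one_le_left (zero_le) ?_)
    exact ENNReal.one_le_coe_iff.2 (le_max_left _ _)
  rcases Iv_tri e (t := t) hs with h | h | h
  · have hsub : Iv (!e) s ⊆ insert t ((Iv (!e) s ∩ Iv e t) ∪ Iv (!e) t) := by
      intro u hu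
      rcases Iv_tri e (t := t) (Iv_pos _ hs hu) with h | h | h
      · exact Or.inr (Or.inl ⟨hu, h⟩)
      · exact Or.inl h
      · exact Or.inr (Or.inr h)
    have hβt := hβ.1 t ht
    have hRp := Rt_pos ht hs
    have h5 : Lst r (Iv (!e) s ∩ Iv e t) (fun s => ENNReal.ofReal (β s)) ≤
        C3.toNNReal * C2 * C4 * ENNReal.ofReal (Rt t s ^ ε) * Bn e r β t := by
      have h6 : ∀ u ∈ Iv (!e) s ∩ Iv e t, ENNReal.ofReal (β u) ≤
          ENNReal.ofReal (C3 * Rt t s ^ ε * β t) *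
            ENNReal.ofReal ((u / s) ^ (-(sg e * ε))) := by
        rintro u ⟨-, hu2⟩
        have hu0 : 0 < u := Iv_pos e ht hu2
        rw [← ENNReal.ofReal_mul (by positivity)]
        apply ENNReal.ofReal_le_ofReal
        refine (H3 t u ht hu0).trans (le_of_eq ?_)
        have e3 : (u / t) ^ (-(sg e * ε)) = (s / t) ^ (-(sg e * ε)) * (u / s) ^ (-(sg e * ε)) := by
          rw [← Real.mul_rpow (by positivity) (by positivity)]
          congr 1
          field_simp
        rw [Real.rpow_zero, Rt_Iv e ht hu2, Rt_Iv e ht h, e3]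
        ring
      calc _ ≤ _ := Lst_mono ((Iv_meas _ _).inter (Iv_meas _ _)) h6
        _ = _ := Lst_const hr _ ENNReal.ofReal_ne_top _
        _ ≤ ENNReal.ofReal (C3 * Rt t s ^ ε * β t) * C4 := by
          gcongr
          exact (Lst_mono_set _ inter_subset_left).trans (H4 s hs)
        _ = ENNReal.ofReal C3 * ENNReal.ofReal (Rt t s ^ ε) * ENNReal.ofReal (β t) * C4 := by
          rw [ENNReal.ofReal_mul (by positivity), ENNReal.ofReal_mul (by positivity)]
        _ ≤ ENNReal.ofReal C3 * ENNReal.ofReal (Rt t s ^ ε) * (C2 * Bn e r β t) * C4 := by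
          gcongr; exact H2 t ht
        _ = _ := by
          change _ = ENNReal.ofReal C3 * _ * _ * _ * _
          ring
    calc Bn e r β s ≤ _ := Lst_mono_set _ hsub
      _ = _ := Lst_insert _ _ _ _
      _ ≤ _ := H1 _ _ _
      _ ≤ C1 * (C3.toNNReal * C2 * C4 * ENNReal.ofReal (Rt t s ^ ε) * Bn e r β t +
          1 * ENNReal.ofReal (Rt t s ^ ε) * Bn e r β t) := by
        gcongr
        rw [one_mul]
        exact le_mul_of_one_le_left (zero_le) hR
      _ = ((C1 * (C3.toNNReal * C2 * C4 + 1) : NNReal) : ℝ≥0∞) *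
          ENNReal.ofReal (Rt t s ^ ε) * Bn e r β t := by push_cast; ring
      _ ≤ _ := by gcongr; exact le_max_right _ _
  · subst h; exact triv le_rfl
  · exact triv (Bn_mono e h)

lemma Bn_pos (e : Bool) {r : ℝ≥0∞} (hr : 0 < r) {β : ℝ → ℝ} (hβ : RV 0 β) {t : ℝ} (ht : 0 < t) :
    0 < Bn e r β t := by
  obtain ⟨C, H⟩ := Bn_lower e hr hβ
  by_contra h
  have h0 : Bn e r β t = 0 := by simpa using h
  have := H t ht
  rw [h0, mul_zero] at this
  exact absurd this (not_le.2 (ENNReal.ofReal_pos.2 (hβ.1 t ht)))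

lemma Bn_fin (e : Bool) {r : ℝ≥0∞} (hr : 0 < r) {β : ℝ → ℝ} (hβ : RV 0 β)
    (h1 : Bn e r β 1 ≠ ∞) {t : ℝ} (ht : 0 < t) : Bn e r β t ≠ ∞ := by
  obtain ⟨C, H⟩ := Bn_upper e hr hβ one_pos
  refine ne_top_of_le_ne_top ?_ (H t 1 ht one_pos)
  exact ENNReal.mul_ne_top (ENNReal.mul_ne_top ENNReal.coe_ne_top ENNReal.ofReal_ne_top) h1

lemma Bn_RV (e : Bool) {r : ℝ≥0∞} (hr : 0 < r) {β : ℝ → ℝ} (hβ : RV 0 β)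
    (h1 : Bn e r β 1 ≠ ∞) : RV 0 (fun t => (Bn e r β t).toReal) := by
  refine ⟨fun t ht => ENNReal.toReal_pos (Bn_pos e hr hβ ht).ne' (Bn_fin e hr hβ h1 ht),
    fun ε hε => ?_⟩
  obtain ⟨C, H⟩ := Bn_upper e hr hβ hε
  refine ⟨C + 1, by positivity, fun s t hs ht => ?_⟩
  have h2 := H t s ht hs
  have hR := Rt_pos hs ht
  have h3 := ENNReal.toReal_mono (ENNReal.mul_ne_top (ENNReal.mul_ne_top ENNReal.coe_ne_top
    ENNReal.ofReal_ne_top) (Bn_fin e hr hβ h1 hs)) h2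
  rw [ENNReal.toReal_mul, ENNReal.toReal_mul, ENNReal.toReal_ofReal (by positivity)] at h3
  refine h3.trans ?_
  rw [Real.rpow_zero, mul_one]
  gcongr
  simp

/-- The generic limiting quasi-norm of a function `φ`. -/
def Gn (e : Bool) (σ : ℝ) (r q : ℝ≥0∞) (β a : ℝ → ℝ) (φ : ℝ → ℝ≥0∞) : ℝ≥0∞ :=
  Lst r (Ioi 0) (fun t => ENNReal.ofReal (β t) *
    Lst q (Iv e t) (fun u => ENNReal.ofReal (u ^ (-σ) * a u) * φ u))

lemma Gn_lower (e : Bool) (σ : ℝ) {r q : ℝ≥0∞} (hr : 0 < r) (hq : 0 < q) {β a : ℝ → ℝ}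
    (ha : RV 0 a) :
    ∃ C : NNReal, ∀ (φ : ℝ → ℝ≥0∞) (t : ℝ), 0 < t →
      (∀ u s, 0 < u → 0 < s → u ≤ 2 * s → s ≤ 2 * u → φ s ≤ 2 * φ u) →
      ENNReal.ofReal (t ^ (-σ) * a t) * φ t * Bn e r β t ≤ C * Gn e σ r q β a φ := by
  obtain ⟨C, H⟩ := Iv_lower e hq
  have hw := (RV.power (-σ)).mul ha
  obtain ⟨D, hD, H'⟩ := hw.doubling 2 two_pos
  refine ⟨C * (D.toNNReal * 2), fun φ t ht hφ => ?_⟩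
  set X : ℝ → ℝ≥0∞ := fun t => Lst q (Iv e t) (fun u => ENNReal.ofReal (u ^ (-σ) * a u) * φ u)
    with hX
  have h1 : ENNReal.ofReal (t ^ (-σ) * a t) * φ t ≤ C * (D.toNNReal * 2) * X t := by
    have := H (fun u => (ENNReal.ofReal D * 2) * (ENNReal.ofReal (u ^ (-σ) * a u) * φ u)) t
      (ENNReal.ofReal (t ^ (-σ) * a t) * φ t) ht (fun u hu h1 h2 => by
        have e1 := hφ u t hu ht h1 h2
        have e2 := ENNReal.ofReal_le_ofReal (H' u t hu ht h2 h1)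
        rw [ENNReal.ofReal_mul hD.le] at e2
        calc _ ≤ _ := mul_le_mul' e2 e1
          _ = _ := by ring)
    rw [Lst_const hq _ (ENNReal.mul_ne_top ENNReal.ofReal_ne_top (by simp)), ← mul_assoc] at this
    exact this
  have h2 : X t * Bn e r β t ≤ Gn e σ r q β a φ := by
    calc X t * Bn e r β t ≤ Lst r (Iv (!e) t) (fun s => X t * ENNReal.ofReal (β s)) :=
          Lst_const_le hr _ _ _
      _ ≤ Lst r (Iv (!e) t) (fun s => ENNReal.ofReal (β s) * X s) := by
          apply Lst_mono (Iv_meas _ _)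
          intro s hs
          rw [mul_comm]
          gcongr
          apply Lst_mono_set
          have := Iv_symm (!e) ht hs
          rw [Bool.not_not] at this
          exact Iv_sub e this
      _ ≤ _ := Lst_mono_set _ (Iv_pos _ ht)
  calc _ ≤ C * (D.toNNReal * 2) * X t * Bn e r β t := by gcongr
    _ = C * (D.toNNReal * 2) * (X t * Bn e r β t) := by ring
    _ ≤ C * (D.toNNReal * 2) * Gn e σ r q β a φ := by gcongr
    _ = _ := by push_cast; ring

lemma Gn_upper (e : Bool) (σ κ l : ℝ) (hκ : 0 < sg e * κ) (hl : 0 < sg e * l)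
    {r q : ℝ≥0∞} (hr : 0 < r) (hq : 0 < q) {β a : ℝ → ℝ} (hβ : RV 0 β) (ha : RV 0 a) :
    ∃ C : NNReal, ∀ (φ : ℝ → ℝ≥0∞) (t : ℝ) (M M' : ℝ≥0∞), 0 < t → M ≠ ∞ → M' ≠ ∞ →
      (∀ u ∈ Iv e t, φ u ≤ M * ENNReal.ofReal (u ^ (σ + κ))) →
      (∀ u ∈ Iv (!e) t, φ u ≤ M' * ENNReal.ofReal (u ^ (σ - l))) →
      Gn e σ r q β a φ ≤ C * ((M * ENNReal.ofReal (t ^ κ) + M' * ENNReal.ofReal (t ^ (-l))) *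
        (ENNReal.ofReal (a t) * Bn e r β t)) := by
  have hRV1 : RV κ (fun u => u ^ κ * a u) := ((RV.power κ).mul ha).cast (by ring)
  have hRV2 : RV (-l) (fun u => u ^ (-l) * a u) := ((RV.power (-l)).mul ha).cast (by ring)
  have hRV3 : RV κ (fun u => β u * (u ^ κ * a u)) := (hβ.mul hRV1).cast (by ring)
  obtain ⟨C1, H1⟩ := Iv_RV e hq hκ hRV1
  obtain ⟨C2, H2⟩ := Lst_union q
  obtain ⟨C3, H3⟩ := Iv_RV (!e) hq (κ := -l) (by rw [sg_not]; linarith) hRV2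
  obtain ⟨C4, H4⟩ := Lst_union r
  obtain ⟨C5, H5⟩ := Iv_RV e hr hκ hRV3
  obtain ⟨C6, H6⟩ := Bn_lower e hr hβ
  refine ⟨C4 * (C1 * C5 * C6 + C2 * (C1 + C3)), fun φ t M M' ht hM hM' hφ hφ' => ?_⟩
  set X : ℝ → ℝ≥0∞ := fun t => Lst q (Iv e t) (fun u => ENNReal.ofReal (u ^ (-σ) * a u) * φ u)
    with hX
  have hat := ha.1 t ht
  have step1 : ∀ τ, 0 < τ → Iv e τ ⊆ Iv e t → X τ ≤ M * (C1 * ENNReal.ofReal (τ ^ κ * a τ)) := by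
    intro τ hτ hsub
    calc X τ ≤ Lst q (Iv e τ) (fun u => M * ENNReal.ofReal (u ^ κ * a u)) := by
          apply Lst_mono (Iv_meas _ _)
          intro u hu
          have hu0 : 0 < u := Iv_pos e hτ hu
          have := ha.1 u hu0
          calc _ ≤ ENNReal.ofReal (u ^ (-σ) * a u) * (M * ENNReal.ofReal (u ^ (σ + κ))) := by
                gcongr; exact hφ u (hsub hu)
            _ = M * (ENNReal.ofReal (u ^ (-σ) * a u) * ENNReal.ofReal (u ^ (σ + κ))) := by ring
            _ = _ := by
              rw [← ENNReal.ofReal_mul (by positivity), mul_right_comm, ← Real.rpow_add hu0]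
              congr 4; ring
      _ = _ := Lst_const hq _ hM _
      _ ≤ _ := by gcongr; exact H1 τ hτ
  have step2 : Lst q (Iv (!e) t) (fun u => ENNReal.ofReal (u ^ (-σ) * a u) * φ u) ≤
      M' * (C3 * ENNReal.ofReal (t ^ (-l) * a t)) := by
    calc _ ≤ Lst q (Iv (!e) t) (fun u => M' * ENNReal.ofReal (u ^ (-l) * a u)) := by
          apply Lst_mono (Iv_meas _ _)
          intro u hu
          have hu0 : 0 < u := Iv_pos (!e) ht hu
          have := ha.1 u hu0
          calc _ ≤ ENNReal.ofReal (u ^ (-σ) * a u) * (M' * ENNReal.ofReal (u ^ (σ - l))) := by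
                gcongr; exact hφ' u hu
            _ = M' * (ENNReal.ofReal (u ^ (-σ) * a u) * ENNReal.ofReal (u ^ (σ - l))) := by ring
            _ = _ := by
              rw [← ENNReal.ofReal_mul (by positivity), mul_right_comm, ← Real.rpow_add hu0]
              congr 4; ring
      _ = _ := Lst_const hq _ hM' _
      _ ≤ _ := by gcongr; exact H3 t ht
  set P := M * ENNReal.ofReal (t ^ κ) with hP
  set L := M' * ENNReal.ofReal (t ^ (-l)) with hL
  have hPL : P + L ≠ ∞ := ENNReal.add_ne_top.2 ⟨ENNReal.mul_ne_top hM ENNReal.ofReal_ne_top,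
    ENNReal.mul_ne_top hM' ENNReal.ofReal_ne_top⟩
  have step3 : ∀ τ, 0 < τ → X τ ≤ C2 * (C1 + C3) * (P + L) * ENNReal.ofReal (a t) := by
    intro τ hτ
    calc X τ ≤ _ := Lst_mono_set _ ((Iv_pos e hτ).trans (Iv_cover e (t := t)))
      _ = _ := Lst_insert _ _ _ _
      _ ≤ _ := H2 _ _ _
      _ ≤ C2 * (M * (C1 * ENNReal.ofReal (t ^ κ * a t)) +
          M' * (C3 * ENNReal.ofReal (t ^ (-l) * a t))) := by
        gcongr; exact step1 t ht le_rfl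
      _ = C2 * (C1 * P + C3 * L) * ENNReal.ofReal (a t) := by
        rw [ENNReal.ofReal_mul (by positivity), ENNReal.ofReal_mul (by positivity)]; ring
      _ ≤ C2 * (C1 * (P + L) + C3 * (P + L)) * ENNReal.ofReal (a t) := by
        gcongr
        · exact le_self_add
        · exact le_add_self
      _ = _ := by ring
  have out1 : Lst r (Iv e t) (fun s => ENNReal.ofReal (β s) * X s) ≤
      C1 * C5 * C6 * (P + L) * (ENNReal.ofReal (a t) * Bn e r β t) := by
    calc _ ≤ Lst r (Iv e t) (fun s => (M * C1) * ENNReal.ofReal (β s * (s ^ κ * a s))) := by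
          apply Lst_mono (Iv_meas _ _)
          intro s hs
          have hs0 : 0 < s := Iv_pos e ht hs
          rw [ENNReal.ofReal_mul (hβ.1 s hs0).le]
          calc _ ≤ ENNReal.ofReal (β s) * (M * (C1 * ENNReal.ofReal (s ^ κ * a s))) := by
                gcongr; exact step1 s hs0 (Iv_sub e hs)
            _ = _ := by ring
      _ = _ := Lst_const hr _ (ENNReal.mul_ne_top hM ENNReal.coe_ne_top) _
      _ ≤ M * C1 * (C5 * ENNReal.ofReal (β t * (t ^ κ * a t))) := by gcongr; exact H5 t ht
      _ = C1 * C5 * ENNReal.ofReal (β t) * P * ENNReal.ofReal (a t) := by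
          rw [ENNReal.ofReal_mul (hβ.1 t ht).le, ENNReal.ofReal_mul (by positivity)]; ring
      _ ≤ C1 * C5 * (C6 * Bn e r β t) * (P + L) * ENNReal.ofReal (a t) := by
          gcongr
          · exact H6 t ht
          · exact le_self_add
      _ = _ := by ring
  have out2 : Lst r (Iv (!e) t) (fun s => ENNReal.ofReal (β s) * X s) ≤
      C2 * (C1 + C3) * (P + L) * (ENNReal.ofReal (a t) * Bn e r β t) := by
    calc _ ≤ Lst r (Iv (!e) t) (fun s => (C2 * (C1 + C3) * (P + L) * ENNReal.ofReal (a t)) *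
          ENNReal.ofReal (β s)) := by
          apply Lst_mono (Iv_meas _ _)
          intro s hs
          rw [mul_comm]
          gcongr
          exact step3 s (Iv_pos _ ht hs)
      _ = _ := Lst_const hr _ (ENNReal.mul_ne_top (ENNReal.mul_ne_top (by
          exact ENNReal.mul_ne_top ENNReal.coe_ne_top (by simp)) hPL)
            ENNReal.ofReal_ne_top) _
      _ = _ := by rw [mul_assoc]; rfl
  calc Gn e σ r q β a φ ≤ _ := Lst_mono_set _ (Iv_cover e (t := t))
    _ = _ := Lst_insert _ _ _ _
    _ ≤ _ := H4 _ _ _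
    _ ≤ C4 * (C1 * C5 * C6 * (P + L) * (ENNReal.ofReal (a t) * Bn e r β t) +
        C2 * (C1 + C3) * (P + L) * (ENNReal.ofReal (a t) * Bn e r β t)) := by gcongr
    _ = _ := by push_cast; ring

/-! ### The K-functional -/

lemma LqNorm_congr {q : ℝ≥0∞} {S : Set ℝ} (hS : MeasurableSet S) {h h' : ℝ → ℝ≥0∞}
    (H : ∀ u ∈ S, h u = h' u) : LqNorm q S h = LqNorm q S h' := by
  unfold LqNorm
  split_ifs
  · apply essSup_congr_ae
    filter_upwards [ae_restrict_mem hS] with u hu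
    rw [H u hu]
  · congr 1
    apply setLIntegral_congr_fun hS
    intro u hu
    simp only [H u hu]

lemma LqNorm_svWgt {r : ℝ≥0∞} {S : Set ℝ} (hS : MeasurableSet S) (hS0 : S ⊆ Ioi 0) (β : ℝ → ℝ) :
    LqNorm r S (svWgt r β) = Lst r S (fun s => ENNReal.ofReal (β s)) := by
  unfold Lst
  apply LqNorm_congr hS
  intro u hu
  have hu0 : 0 < u := hS0 hu
  rw [svWgt, ENNReal.ofReal_mul (by positivity)]

lemma normK_eq (N₀ N₁ : E → ℝ≥0∞) (θ : ℝ) (q : ℝ≥0∞) (b : ℝ → ℝ) (f : E) :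
    normK N₀ N₁ θ q b f =
      Lst q (Ioi 0) (fun u => ENNReal.ofReal (u ^ (-θ) * b u) * Kf N₀ N₁ u f) := by
  unfold normK Lst
  apply LqNorm_congr measurableSet_Ioi
  intro u hu
  have hu0 : 0 < u := hu
  rw [← mul_assoc, ← ENNReal.ofReal_mul (by positivity), ← mul_assoc, ← Real.rpow_add hu0]
  ring_nf

lemma normL_eq (N₀ N₁ : E → ℝ≥0∞) (σ : ℝ) (r q : ℝ≥0∞) (b a : ℝ → ℝ) (f : E) :
    normL N₀ N₁ σ r q b a f =
      Gn true σ r q (fun t => b t / a t) a (fun u => Kf N₀ N₁ u f) := by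
  unfold normL Gn
  rw [Lst]
  apply LqNorm_congr measurableSet_Ioi
  intro t ht
  have ht0 : 0 < t := ht
  rw [ENNReal.ofReal_mul (by positivity), mul_assoc]
  congr 2
  simp only [Iv, if_true]
  rw [Lst]
  apply LqNorm_congr measurableSet_Ioo
  intro u hu
  have hu0 : 0 < u := hu.1
  rw [← mul_assoc, ← ENNReal.ofReal_mul (by positivity), ← mul_assoc, ← Real.rpow_add hu0]
  ring_nf

lemma normR_eq (N₀ N₁ : E → ℝ≥0∞) (σ : ℝ) (r q : ℝ≥0∞) (b a : ℝ → ℝ) (f : E) :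
    normR N₀ N₁ σ r q b a f =
      Gn false σ r q (fun t => b t / a t) a (fun u => Kf N₀ N₁ u f) := by
  unfold normR Gn
  rw [Lst]
  apply LqNorm_congr measurableSet_Ioi
  intro t ht
  have ht0 : 0 < t := ht
  rw [ENNReal.ofReal_mul (by positivity), mul_assoc]
  congr 2
  simp only [Iv, Bool.false_eq_true, if_false]
  rw [Lst]
  apply LqNorm_congr measurableSet_Ioi
  intro u hu
  have hu0 : 0 < u := ht0.trans hu
  rw [← mul_assoc, ← ENNReal.ofReal_mul (by positivity), ← mul_assoc, ← Real.rpow_add hu0]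
  ring_nf

lemma Kf_scale (N₀ N₁ : E → ℝ≥0∞) {A s t : ℝ} (hA : 1 ≤ A) (h : s ≤ A * t) (f : E) :
    Kf N₀ N₁ s f ≤ ENNReal.ofReal A * Kf N₀ N₁ t f := by
  unfold Kf
  rw [ENNReal.mul_iInf_of_ne (ENNReal.ofReal_pos.2 (by linarith)).ne' ENNReal.ofReal_ne_top]
  apply iInf_mono
  intro g
  rw [mul_add, ← mul_assoc, ← ENNReal.ofReal_mul (by linarith)]
  gcongr
  exact le_mul_of_one_le_left (zero_le) (ENNReal.one_le_ofReal.2 hA)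

lemma Kf_dbl (N₀ N₁ : E → ℝ≥0∞) (f : E) {u s : ℝ} (h : s ≤ 2 * u) :
    Kf N₀ N₁ s f ≤ 2 * Kf N₀ N₁ u f := by
  have := Kf_scale N₀ N₁ one_le_two h f
  simpa using this

lemma Kf_tri (A₀ A₁ : QuasiBanach E) : ∃ C : NNReal, 1 ≤ C ∧ ∀ (t : ℝ) (f g : E),
    Kf A₀.N A₁.N t (f + g) ≤ C * (Kf A₀.N A₁.N t f + Kf A₀.N A₁.N t g) := by
  obtain ⟨C₀, h0, h0', H0⟩ := A₀.quasi
  obtain ⟨C₁, h1, h1', H1⟩ := A₁.quasi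
  lift C₀ to NNReal using h0'
  lift C₁ to NNReal using h1'
  refine ⟨max C₀ C₁, le_max_of_le_left (by exact_mod_cast h0), fun t f g => ?_⟩
  have hC : ((max C₀ C₁ : NNReal) : ℝ≥0∞) ≠ 0 := by
    have : (1 : NNReal) ≤ max C₀ C₁ := le_max_of_le_left (by exact_mod_cast h0)
    intro h
    rw [ENNReal.coe_eq_zero] at h
    rw [h] at this
    exact absurd this (by simp)
  set C := max C₀ C₁
  unfold Kf
  rw [ENNReal.iInf_add, ENNReal.mul_iInf_of_ne hC ENNReal.coe_ne_top]
  refine le_iInf fun x => ?_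
  rw [ENNReal.add_iInf, ENNReal.mul_iInf_of_ne hC ENNReal.coe_ne_top]
  refine le_iInf fun y => ?_
  refine (iInf_le _ (x + y)).trans ?_
  have e : f + g - (x + y) = (f - x) + (g - y) := by abel
  rw [e]
  calc _ ≤ C * (A₀.N x + A₀.N y) + ENNReal.ofReal t * (C * (A₁.N (f - x) + A₁.N (g - y))) := by
        gcongr
        · refine (H0 x y).trans ?_
          gcongr
          exact le_max_left _ _
        · refine (H1 _ _).trans ?_
          gcongr
          exact le_max_right _ _
    _ = _ := by ring

lemma Kf_le_zero (A₀ A₁ : QuasiBanach E) (t : ℝ) (f : E) : Kf A₀.N A₁.N t f ≤ A₀.N f := by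
  refine (iInf_le _ f).trans ?_
  simp [A₁.zero]

lemma Kf_le_one (A₀ A₁ : QuasiBanach E) (t : ℝ) (f : E) :
    Kf A₀.N A₁.N t f ≤ ENNReal.ofReal t * A₁.N f := by
  refine (iInf_le _ 0).trans ?_
  simp [A₀.zero]

lemma QuasiBanach.neg (A : QuasiBanach E) (x : E) : A.N (-x) = A.N x := by
  have := A.smul (-1) x
  simpa using this

/-! ### Estimates for the K-functional of the limiting couple -/

lemma K_lower (A₀ A₁ : QuasiBanach E) (θ₀ θ₁ : ℝ) {r₀ r₁ q₀ q₁ : ℝ≥0∞}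
    (hr₀ : 0 < r₀) (hr₁ : 0 < r₁) (hq₀ : 0 < q₀) (hq₁ : 0 < q₁) {a₀ a₁ b₀ b₁ c₀ c₁ ρ : ℝ → ℝ}
    (ha₀ : RV 0 a₀) (ha₁ : RV 0 a₁)
    (hc₀ : ∀ t, 0 < t → ENNReal.ofReal (c₀ t) =
      ENNReal.ofReal (a₀ t) * Bn true r₀ (fun t => b₀ t / a₀ t) t)
    (hc₁ : ∀ t, 0 < t → ENNReal.ofReal (c₁ t) =
      ENNReal.ofReal (a₁ t) * Bn false r₁ (fun t => b₁ t / a₁ t) t)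
    (hρ0 : ∀ t, 0 < t → 0 < ρ t)
    (hρ : ∀ t, 0 < t → t ^ (-θ₀) * c₀ t = ρ t * (t ^ (-θ₁) * c₁ t)) :
    ∃ C : NNReal, ∀ (t : ℝ) (f : E), 0 < t →
      ENNReal.ofReal (t ^ (-θ₀) * c₀ t) * Kf A₀.N A₁.N t f ≤
      C * Kf (normL A₀.N A₁.N θ₀ r₀ q₀ b₀ a₀) (normR A₀.N A₁.N θ₁ r₁ q₁ b₁ a₁) (ρ t) f := by
  obtain ⟨C0, H0⟩ := Gn_lower true θ₀ hr₀ hq₀ ha₀ (β := fun t => b₀ t / a₀ t)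
  obtain ⟨C1, H1⟩ := Gn_lower false θ₁ hr₁ hq₁ ha₁ (β := fun t => b₁ t / a₁ t)
  obtain ⟨Cq, -, Hq⟩ := Kf_tri A₀ A₁
  refine ⟨Cq * (C0 + C1) + 1, fun t f ht => ?_⟩
  have key0 : ∀ g, ENNReal.ofReal (t ^ (-θ₀) * c₀ t) * Kf A₀.N A₁.N t g ≤
      C0 * normL A₀.N A₁.N θ₀ r₀ q₀ b₀ a₀ g := by
    intro g
    have := H0 (fun u => Kf A₀.N A₁.N u g) t ht (fun u s _ _ _ h => Kf_dbl _ _ _ h)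
    rw [normL_eq]
    refine le_trans (le_of_eq ?_) this
    rw [ENNReal.ofReal_mul (by positivity), hc₀ t ht, ENNReal.ofReal_mul (by positivity)]
    ring
  have key1 : ∀ g, ENNReal.ofReal (t ^ (-θ₀) * c₀ t) * Kf A₀.N A₁.N t g ≤
      ENNReal.ofReal (ρ t) * (C1 * normR A₀.N A₁.N θ₁ r₁ q₁ b₁ a₁ g) := by
    intro g
    have := H1 (fun u => Kf A₀.N A₁.N u g) t ht (fun u s _ _ _ h => Kf_dbl _ _ _ h)
    rw [normR_eq]
    refine le_trans (le_of_eq ?_) (mul_le_mul_right this _)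
    rw [hρ t ht, ENNReal.ofReal_mul (hρ0 t ht).le, ENNReal.ofReal_mul (by positivity), hc₁ t ht,
      ENNReal.ofReal_mul (by positivity)]
    ring
  rw [Kf.eq_def (normL A₀.N A₁.N θ₀ r₀ q₀ b₀ a₀), ENNReal.mul_iInf_of_ne (by simp) ENNReal.coe_ne_top]
  refine le_iInf fun g => ?_
  have h1 := Hq t g (f - g)
  rw [add_sub_cancel] at h1
  calc _ ≤ ENNReal.ofReal (t ^ (-θ₀) * c₀ t) *
        (Cq * (Kf A₀.N A₁.N t g + Kf A₀.N A₁.N t (f - g))) := by gcongr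
    _ = Cq * (ENNReal.ofReal (t ^ (-θ₀) * c₀ t) * Kf A₀.N A₁.N t g +
          ENNReal.ofReal (t ^ (-θ₀) * c₀ t) * Kf A₀.N A₁.N t (f - g)) := by ring
    _ ≤ Cq * (C0 * normL A₀.N A₁.N θ₀ r₀ q₀ b₀ a₀ g +
          ENNReal.ofReal (ρ t) * (C1 * normR A₀.N A₁.N θ₁ r₁ q₁ b₁ a₁ (f - g))) := by
        exact mul_le_mul_right (add_le_add (key0 g) (key1 (f - g))) _
    _ ≤ Cq * ((C0 + C1) * normL A₀.N A₁.N θ₀ r₀ q₀ b₀ a₀ g +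
          ENNReal.ofReal (ρ t) * ((C0 + C1) * normR A₀.N A₁.N θ₁ r₁ q₁ b₁ a₁ (f - g))) := by
        gcongr
        · exact le_self_add
        · exact le_add_self
    _ = (Cq * (C0 + C1)) * (normL A₀.N A₁.N θ₀ r₀ q₀ b₀ a₀ g +
          ENNReal.ofReal (ρ t) * normR A₀.N A₁.N θ₁ r₁ q₁ b₁ a₁ (f - g)) := by ring
    _ ≤ _ := by
        gcongr
        push_cast
        exact le_self_add

lemma K_split (A₀ A₁ : QuasiBanach E) : ∃ C : NNReal, ∀ (f : E) (t p p' : ℝ) (X : ℝ≥0∞),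
    0 < t → 0 ≤ p → p ≤ 1 → 0 ≤ p' → p' ≤ 1 → Kf A₀.N A₁.N t f < X →
    (∀ u, 0 < u → u ≤ t → Kf A₀.N A₁.N u f ≤ X * ENNReal.ofReal ((u / t) ^ p)) →
    (∀ u, 0 < u → t ≤ u → Kf A₀.N A₁.N u f ≤ X * ENNReal.ofReal ((u / t) ^ p')) →
    ∃ g, (∀ u, 0 < u → u ≤ t → Kf A₀.N A₁.N u g ≤ C * X * ENNReal.ofReal ((u / t) ^ p)) ∧
      (∀ u, 0 < u → Kf A₀.N A₁.N u g ≤ C * X) ∧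
      (∀ u, 0 < u → Kf A₀.N A₁.N u (f - g) ≤ C * X * ENNReal.ofReal (u / t)) ∧
      (∀ u, 0 < u → t ≤ u →
        Kf A₀.N A₁.N u (f - g) ≤ C * X * ENNReal.ofReal ((u / t) ^ p')) := by
  obtain ⟨Cq, hCq, Hq⟩ := Kf_tri A₀ A₁
  refine ⟨2 * Cq, fun f t p p' X ht hp hp1 hp' hp1' hX h0 h1 => ?_⟩
  unfold Kf at hX
  rw [iInf_lt_iff] at hX
  obtain ⟨g, hg⟩ := hX
  have hg0 : A₀.N g ≤ X := le_self_add.trans hg.le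
  have hg1 : ENNReal.ofReal t * A₁.N (f - g) ≤ X := le_add_self.trans hg.le
  have hC1 : (1 : ℝ≥0∞) ≤ ((2 * Cq : NNReal) : ℝ≥0∞) := by
    have : (1 : NNReal) ≤ 2 * Cq := by
      calc (1 : NNReal) ≤ Cq := hCq
        _ ≤ 2 * Cq := le_mul_of_one_le_left (zero_le) one_le_two
    exact_mod_cast this
  have k0 : ∀ u, Kf A₀.N A₁.N u g ≤ X := fun u => (Kf_le_zero _ _ _ _).trans hg0
  have k1 : ∀ u, 0 < u → Kf A₀.N A₁.N u (f - g) ≤ X * ENNReal.ofReal (u / t) := by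
    intro u hu
    refine (Kf_le_one _ _ _ _).trans ?_
    have e : u = (u / t) * t := by field_simp
    rw [e, ENNReal.ofReal_mul (by positivity), mul_assoc, mul_comm, ← e]
    gcongr
  refine ⟨g, fun u hu hut => ?_, fun u hu => ?_, fun u hu => ?_, fun u hu hut => ?_⟩
  · have h2 := Hq u f (-(f - g))
    rw [show f + -(f - g) = g by abel] at h2
    have h3 : Kf A₀.N A₁.N u (-(f - g)) ≤ X * ENNReal.ofReal ((u / t) ^ p) := by
      refine (Kf_le_one _ _ _ _).trans ?_
      rw [A₁.neg]
      have e : u = (u / t) * t := by field_simp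
      calc _ = ENNReal.ofReal (u / t) * (ENNReal.ofReal t * A₁.N (f - g)) := by
            rw [← mul_assoc, ← ENNReal.ofReal_mul (by positivity), ← e]
        _ ≤ ENNReal.ofReal ((u / t) ^ p) * X := by
            gcongr
            calc u / t = (u / t) ^ (1 : ℝ) := (Real.rpow_one _).symm
              _ ≤ (u / t) ^ p := Real.rpow_le_rpow_of_exponent_ge (by positivity)
                ((div_le_one ht).2 hut) hp1
        _ = _ := mul_comm _ _
    calc _ ≤ _ := h2
      _ ≤ Cq * (X * ENNReal.ofReal ((u / t) ^ p) + X * ENNReal.ofReal ((u / t) ^ p)) := by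
          gcongr
          exact h0 u hu hut
      _ = _ := by push_cast; ring
  · exact (k0 u).trans (le_mul_of_one_le_left (zero_le) hC1)
  · refine (k1 u hu).trans ?_
    gcongr
    exact (le_mul_of_one_le_left (zero_le) hC1)
  · have h2 := Hq u f (-g)
    rw [← sub_eq_add_neg] at h2
    have h3 : Kf A₀.N A₁.N u (-g) ≤ X * ENNReal.ofReal ((u / t) ^ p') := by
      refine (Kf_le_zero _ _ _ _).trans ?_
      rw [A₀.neg]
      refine hg0.trans ?_
      refine le_mul_of_one_le_right (zero_le) (ENNReal.one_le_ofReal.2 ?_)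
      exact Real.one_le_rpow ((one_le_div ht).2 hut) hp'
    calc _ ≤ _ := h2
      _ ≤ Cq * (X * ENNReal.ofReal ((u / t) ^ p') + X * ENNReal.ofReal ((u / t) ^ p')) := by
          gcongr
          exact h1 u hu hut
      _ = _ := by push_cast; ring

lemma ennreal_le_mul_of_forall {K D M : ℝ≥0∞} (hD : D ≠ ∞)
    (h : ∀ x : ℝ≥0∞, 0 < x → x ≠ ∞ → K ≤ D * (M + x)) : K ≤ D * M := by
  apply ENNReal.le_of_forall_pos_le_add
  intro ε hε _
  have hD1 : D + 1 ≠ ∞ := by simp [hD]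
  refine (h (ε / (D + 1)) (ENNReal.div_pos (by simpa using hε.ne') hD1)
    (ENNReal.div_ne_top (by simp) (by simp))).trans ?_
  rw [mul_add]
  gcongr
  calc D * (ε / (D + 1)) ≤ (D + 1) * (ε / (D + 1)) := by gcongr; exact le_self_add
    _ ≤ ε := ENNReal.mul_div_le

lemma K_upper (A₀ A₁ : QuasiBanach E) {θ₀ θ₁ p p' : ℝ} (hθ₀ : 0 < θ₀) (hθ₁ : θ₁ < 1)
    (hp : θ₀ < p) (hp1 : p ≤ 1) (hp0' : 0 ≤ p') (hp' : p' < θ₁) {r₀ r₁ q₀ q₁ : ℝ≥0∞}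
    (hr₀ : 0 < r₀) (hr₁ : 0 < r₁) (hq₀ : 0 < q₀) (hq₁ : 0 < q₁) {a₀ a₁ b₀ b₁ c₀ c₁ ρ : ℝ → ℝ}
    (ha₀ : RV 0 a₀) (ha₁ : RV 0 a₁)
    (hβ₀ : RV 0 (fun t => b₀ t / a₀ t)) (hβ₁ : RV 0 (fun t => b₁ t / a₁ t))
    (hc₀ : ∀ t, 0 < t → ENNReal.ofReal (c₀ t) =
      ENNReal.ofReal (a₀ t) * Bn true r₀ (fun t => b₀ t / a₀ t) t)
    (hc₁ : ∀ t, 0 < t → ENNReal.ofReal (c₁ t) =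
      ENNReal.ofReal (a₁ t) * Bn false r₁ (fun t => b₁ t / a₁ t) t)
    (hρ0 : ∀ t, 0 < t → 0 < ρ t)
    (hρ : ∀ t, 0 < t → t ^ (-θ₀) * c₀ t = ρ t * (t ^ (-θ₁) * c₁ t)) :
    ∃ C : NNReal, ∀ (f : E) (t : ℝ) (M : ℝ≥0∞), 0 < t → M ≠ ∞ →
      (∀ u, 0 < u → u ≤ t → Kf A₀.N A₁.N u f ≤ M * ENNReal.ofReal ((u / t) ^ p)) →
      (∀ u, 0 < u → t ≤ u → Kf A₀.N A₁.N u f ≤ M * ENNReal.ofReal ((u / t) ^ p')) →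
      Kf (normL A₀.N A₁.N θ₀ r₀ q₀ b₀ a₀) (normR A₀.N A₁.N θ₁ r₁ q₁ b₁ a₁) (ρ t) f ≤
        C * ENNReal.ofReal (t ^ (-θ₀) * c₀ t) * M := by
  obtain ⟨C0, H0⟩ := Gn_upper true θ₀ (p - θ₀) θ₀ (by simp [sg]; linarith) (by simp [sg]; linarith)
    hr₀ hq₀ hβ₀ ha₀
  obtain ⟨C1, H1⟩ := Gn_upper false θ₁ (p' - θ₁) (θ₁ - 1) (by simp [sg]; linarith)
    (by simp [sg]; linarith) hr₁ hq₁ hβ₁ ha₁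
  obtain ⟨Cs, Hs⟩ := K_split A₀ A₁
  refine ⟨2 * Cs * (C0 + C1), fun f t M ht hM h0 h1 => ?_⟩
  apply ennreal_le_mul_of_forall (ENNReal.mul_ne_top ENNReal.coe_ne_top ENNReal.ofReal_ne_top)
  intro x hx hx'
  set X := M + x with hXdef
  have hX : X ≠ ∞ := ENNReal.add_ne_top.2 ⟨hM, hx'⟩
  have hMX : M ≤ X := le_self_add
  have hlt : Kf A₀.N A₁.N t f < X := by
    have := h0 t ht le_rfl
    rw [div_self ht.ne', Real.one_rpow, ENNReal.ofReal_one, mul_one] at this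
    exact this.trans_lt (ENNReal.lt_add_right hM hx.ne')
  obtain ⟨g, g1, g2, g3, g4⟩ := Hs f t p p' X ht (by linarith) hp1 hp0' (by linarith) hlt
    (fun u hu hut => (h0 u hu hut).trans (by gcongr))
    (fun u hu hut => (h1 u hu hut).trans (by gcongr))
  have hpow : ∀ u y : ℝ, 0 < u → ENNReal.ofReal ((u / t) ^ y) =
      ENNReal.ofReal (t ^ (-y)) * ENNReal.ofReal (u ^ y) := by
    intro u y hu
    rw [← ENNReal.ofReal_mul (by positivity), Real.div_rpow hu.le ht.le, Real.rpow_neg ht.le]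
    congr 1
    field_simp
  have hCX : (Cs : ℝ≥0∞) * X ≠ ∞ := ENNReal.mul_ne_top ENNReal.coe_ne_top hX
  have G0 := H0 (fun u => Kf A₀.N A₁.N u g) t (Cs * X * ENNReal.ofReal (t ^ (-p))) (Cs * X) ht
    (ENNReal.mul_ne_top hCX ENNReal.ofReal_ne_top) hCX
    (fun u hu => by
      simp only [Iv, if_true, mem_Ioo] at hu
      refine (g1 u hu.1 hu.2.le).trans (le_of_eq ?_)
      rw [hpow u p hu.1, show θ₀ + (p - θ₀) = p by ring]
      ring)
    (fun u hu => by
      have hu0 : 0 < u := Iv_pos _ ht hu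
      refine (g2 u hu0).trans (le_of_eq ?_)
      rw [sub_self, Real.rpow_zero, ENNReal.ofReal_one, mul_one])
  have G1 := H1 (fun u => Kf A₀.N A₁.N u (f - g)) t (Cs * X * ENNReal.ofReal (t ^ (-p')))
    (Cs * X * ENNReal.ofReal (t ^ (-1 : ℝ))) ht
    (ENNReal.mul_ne_top hCX ENNReal.ofReal_ne_top) (ENNReal.mul_ne_top hCX ENNReal.ofReal_ne_top)
    (fun u hu => by
      have hu0 : 0 < u := Iv_pos _ ht hu
      simp only [Iv, Bool.false_eq_true, if_false, mem_Ioi] at hu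
      refine (g4 u hu0 hu.le).trans (le_of_eq ?_)
      rw [hpow u p' hu0, show θ₁ + (p' - θ₁) = p' by ring]
      ring)
    (fun u hu => by
      have hu0 : 0 < u := Iv_pos _ ht hu
      refine (g3 u hu0).trans (le_of_eq ?_)
      have := hpow u 1 hu0
      rw [Real.rpow_one] at this
      rw [this, show θ₁ - (θ₁ - 1) = 1 by ring]
      ring)
  rw [← normL_eq, ← hc₀ t ht] at G0
  rw [← normR_eq, ← hc₁ t ht] at G1
  have F0 : normL A₀.N A₁.N θ₀ r₀ q₀ b₀ a₀ g ≤
      2 * Cs * C0 * ENNReal.ofReal (t ^ (-θ₀) * c₀ t) * X := by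
    refine G0.trans (le_of_eq ?_)
    rw [mul_assoc (Cs * X), ← ENNReal.ofReal_mul (by positivity), ← Real.rpow_add ht,
      show -p + (p - θ₀) = -θ₀ by ring, ENNReal.ofReal_mul (by positivity)]
    ring
  have F1 : ENNReal.ofReal (ρ t) * normR A₀.N A₁.N θ₁ r₁ q₁ b₁ a₁ (f - g) ≤
      2 * Cs * C1 * ENNReal.ofReal (t ^ (-θ₀) * c₀ t) * X := by
    refine (mul_le_mul_right G1 _).trans (le_of_eq ?_)
    rw [mul_assoc (Cs * X), ← ENNReal.ofReal_mul (by positivity), ← Real.rpow_add ht,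
      mul_assoc (Cs * X), ← ENNReal.ofReal_mul (by positivity), ← Real.rpow_add ht,
      show -p' + (p' - θ₁) = -θ₁ by ring, show -1 + -(θ₁ - 1) = -θ₁ by ring,
      hρ t ht, ENNReal.ofReal_mul (hρ0 t ht).le, ENNReal.ofReal_mul (by positivity)]
    ring
  refine (iInf_le _ g).trans ((add_le_add F0 F1).trans (le_of_eq ?_))
  push_cast
  ring
/-! ### Sequence norms and discretization -/

/-- The `ℓ_r` quasi-norm of a two-sided sequence. -/
def sN (r : ℝ≥0∞) (x : ℤ → ℝ≥0∞) : ℝ≥0∞ :=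
  if r = ∞ then ⨆ k, x k else (∑' k, x k ^ r.toReal) ^ (r.toReal)⁻¹

lemma sN_top (x : ℤ → ℝ≥0∞) : sN ∞ x = ⨆ k, x k := by simp [sN]

lemma sN_fin {r : ℝ≥0∞} (hr : r ≠ ∞) (x : ℤ → ℝ≥0∞) :
    sN r x = (∑' k, x k ^ r.toReal) ^ (r.toReal)⁻¹ := by simp [sN, hr]

lemma sN_mono {r : ℝ≥0∞} {x y : ℤ → ℝ≥0∞} (h : ∀ k, x k ≤ y k) : sN r x ≤ sN r y := by
  unfold sN
  split_ifs
  · exact iSup_mono h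
  · refine ENNReal.rpow_le_rpow (ENNReal.tsum_le_tsum fun k => ?_) (by positivity)
    exact ENNReal.rpow_le_rpow (h k) (by positivity)

lemma sN_const {r : ℝ≥0∞} (hr : 0 < r) (c : ℝ≥0∞) (x : ℤ → ℝ≥0∞) :
    sN r (fun k => c * x k) = c * sN r x := by
  unfold sN
  split_ifs with h
  · rw [ENNReal.mul_iSup]
  · have hp : 0 < r.toReal := ENNReal.toReal_pos hr.ne' h
    simp only [ENNReal.mul_rpow_of_nonneg _ _ hp.le]
    rw [ENNReal.tsum_mul_left, ENNReal.mul_rpow_of_nonneg _ _ (by positivity),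
      ← ENNReal.rpow_mul, mul_inv_cancel₀ hp.ne', ENNReal.rpow_one]

lemma sN_le_of_pow {r : ℝ≥0∞} (hr : 0 < r) (hr' : r ≠ ∞) {x y : ℤ → ℝ≥0∞} {C : ℝ≥0∞}
    (h : ∑' k, x k ^ r.toReal ≤ C * ∑' k, y k ^ r.toReal) :
    sN r x ≤ C ^ (r.toReal)⁻¹ * sN r y := by
  have hp : 0 < r.toReal := ENNReal.toReal_pos hr.ne' hr'
  rw [sN_fin hr', sN_fin hr', ← ENNReal.mul_rpow_of_nonneg _ _ (by positivity)]
  exact ENNReal.rpow_le_rpow h (by positivity)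

/-- dyadic intervals -/
def dI (k : ℤ) : Set ℝ := Ico ((2:ℝ) ^ k) ((2:ℝ) ^ (k + 1))

lemma dI_union : ⋃ k, dI k = Ioi (0:ℝ) := by
  ext x
  simp only [mem_iUnion, mem_Ioi]
  constructor
  · rintro ⟨k, hk⟩
    exact lt_of_lt_of_le (by positivity) hk.1
  · intro hx
    exact exists_mem_Ico_zpow hx one_lt_two

lemma dI_disj : Pairwise (Function.onFun Disjoint dI) := by
  have : Monotone (fun k : ℤ => (2:ℝ) ^ k) := zpow_right_mono₀ one_le_two
  have := this.pairwise_disjoint_on_Ico_succ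
  simp only [Order.succ_eq_add_one] at this
  exact this

lemma lint_dyadic (g : ℝ → ℝ≥0∞) : ∫⁻ u in Ioi (0:ℝ), g u = ∑' k, ∫⁻ u in dI k, g u := by
  rw [← dI_union]
  exact lintegral_iUnion (fun k => measurableSet_Ico) dI_disj g

lemma dI_vol (k : ℤ) : volume (dI k) = ENNReal.ofReal ((2:ℝ) ^ k) := by
  rw [dI, Real.volume_Ico, zpow_add_one₀ two_ne_zero]
  congr 1
  ring

lemma disc_upper {r : ℝ≥0∞} (hr : 0 < r) {h : ℝ → ℝ≥0∞} {D : NNReal}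
    (H : ∀ s t, 0 < s → 0 < t → s ≤ 2 * t → t ≤ 2 * s → h s ≤ D * h t) :
    Lst r (Ioi 0) h ≤ D * sN r (fun k => h ((2:ℝ) ^ k)) := by
  have Hk : ∀ (k : ℤ), ∀ u ∈ dI k, h u ≤ D * h ((2:ℝ) ^ k) := by
    intro k u hu
    have h2 : (0:ℝ) < 2 ^ k := by positivity
    have h3 := hu.2
    rw [zpow_add_one₀ two_ne_zero] at h3
    exact H _ _ (h2.trans_le hu.1) h2 (by linarith) (by linarith [hu.1])
  by_cases hr' : r = ∞
  · subst hr'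
    rw [Lst_top, sN_top]
    refine essSup_le_of_ae_le _ ?_
    filter_upwards [ae_restrict_mem measurableSet_Ioi] with u hu
    rw [← dI_union, mem_iUnion] at hu
    obtain ⟨k, hk⟩ := hu
    refine (Hk k u hk).trans ?_
    gcongr
    exact le_iSup (fun k : ℤ => h ((2:ℝ) ^ k)) k
  · have hp : 0 < r.toReal := ENNReal.toReal_pos hr.ne' hr'
    rw [Lst_fin hr hr' measurableSet_Ioi le_rfl, ← sN_const hr, sN_fin hr', lint_dyadic]
    refine ENNReal.rpow_le_rpow (ENNReal.tsum_le_tsum fun k => ?_) (by positivity)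
    have h2 : (0:ℝ) < 2 ^ k := by positivity
    calc _ ≤ ∫⁻ u in dI k, ENNReal.ofReal ((2:ℝ) ^ k)⁻¹ * (D * h ((2:ℝ) ^ k)) ^ r.toReal := by
          apply setLIntegral_mono' measurableSet_Ico
          intro u hu
          gcongr
          · exact hu.1
          · exact Hk k u hu
      _ = (D * h ((2:ℝ) ^ k)) ^ r.toReal := by
          rw [setLIntegral_const, dI_vol, mul_right_comm, ← ENNReal.ofReal_mul (by positivity),
            inv_mul_cancel₀ h2.ne', ENNReal.ofReal_one, one_mul]

lemma disc_lower {r : ℝ≥0∞} (hr : 0 < r) (D : NNReal) : ∃ C : NNReal, ∀ (h : ℝ → ℝ≥0∞),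
    (∀ s t, 0 < s → 0 < t → s ≤ 2 * t → t ≤ 2 * s → h s ≤ D * h t) →
    sN r (fun k => h ((2:ℝ) ^ k)) ≤ C * Lst r (Ioi 0) h := by
  by_cases hr' : r = ∞
  · obtain ⟨C, HC⟩ := Lst_lower hr
    refine ⟨C * D, fun h H => ?_⟩
    subst hr'
    rw [sN_top, ENNReal.coe_mul, mul_assoc, ← Lst_const hr _ ENNReal.coe_ne_top]
    refine iSup_le fun k => ?_
    have h2 : (0:ℝ) < 2 ^ k := by positivity
    refine HC _ _ (2 ^ k) _ h2 (fun u hu => h2.trans hu.1) (fun u hu => ?_)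
    exact H _ _ h2 (h2.trans hu.1) (by linarith [hu.1]) hu.2.le
  · have hp : 0 < r.toReal := ENNReal.toReal_pos hr.ne' hr'
    refine ⟨2 ^ (r.toReal)⁻¹ * D, fun h H => ?_⟩
    rw [ENNReal.coe_mul, mul_assoc, ← Lst_const hr _ ENNReal.coe_ne_top,
      Lst_fin hr hr' measurableSet_Ioi le_rfl, sN_fin hr', lint_dyadic,
      ENNReal.coe_rpow_of_nonneg _ (by positivity), ← ENNReal.mul_rpow_of_nonneg _ _ (by positivity),
      ← ENNReal.tsum_mul_left]
    refine ENNReal.rpow_le_rpow (ENNReal.tsum_le_tsum fun k => ?_) (by positivity)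
    have h2 : (0:ℝ) < 2 ^ k := by positivity
    calc _ = 2 * ∫⁻ u in dI k, ENNReal.ofReal (2 * (2:ℝ) ^ k)⁻¹ * (h ((2:ℝ) ^ k)) ^ r.toReal := by
          rw [setLIntegral_const, dI_vol, mul_right_comm, ← ENNReal.ofReal_mul (by positivity),
            ← mul_assoc]
          rw [show ((2 * (2:ℝ) ^ k)⁻¹ * 2 ^ k) = 2⁻¹ by field_simp,
            ENNReal.ofReal_inv_of_pos two_pos, ENNReal.ofReal_ofNat,
            ENNReal.mul_inv_cancel two_ne_zero ENNReal.ofNat_ne_top, one_mul]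
      _ ≤ _ := by
          push_cast
          gcongr 2 * ?_
          apply setLIntegral_mono' measurableSet_Ico
          intro u hu
          have hu2 := hu.2
          rw [zpow_add_one₀ two_ne_zero] at hu2
          have hu0 : 0 < u := h2.trans_le hu.1
          gcongr
          · linarith
          · exact H _ _ h2 hu0 (by linarith [hu.1]) (by linarith)

lemma tsum_fiber (N : ℕ) (κ : ℤ → ℤ) (hκ : ∀ j j', κ j = κ j' → |j - j'| ≤ N) (y : ℤ → ℝ≥0∞) :
    ∑' j, y (κ j) ≤ (2 * N + 1 : ℕ) * ∑' k, y k := by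
  have e : ∀ j, y (κ j) = ∑' k, if k = κ j then y k else 0 := fun j => by
    rw [tsum_ite_eq]
  simp_rw [e]
  rw [ENNReal.tsum_comm, ← ENNReal.tsum_mul_left]
  refine ENNReal.tsum_le_tsum fun k => ?_
  by_cases hk : ∃ j0, κ j0 = k
  · obtain ⟨j0, rfl⟩ := hk
    calc _ ≤ ∑' j, if j ∈ Finset.Icc (j0 - N) (j0 + N) then y (κ j0) else 0 := by
          refine ENNReal.tsum_le_tsum fun j => ?_
          split_ifs with h1 h2
          · exact le_rfl
          · exfalso
            apply h2
            have := hκ _ _ h1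
            rw [abs_le] at this
            rw [Finset.mem_Icc]
            constructor <;> linarith [this.1, this.2]
          · exact zero_le
          · exact le_rfl
      _ = ∑ j ∈ Finset.Icc (j0 - N) (j0 + N), y (κ j0) := by
          rw [tsum_eq_sum (s := Finset.Icc (j0 - N) (j0 + N))]
          · exact Finset.sum_congr rfl fun j hj => by rw [if_pos hj]
          · intro j hj
            rw [if_neg hj]
      _ = _ := by
          rw [Finset.sum_const, Int.card_Icc, nsmul_eq_mul]
          congr 2
          omega
  · push Not at hk
    have : ∀ j, (if k = κ j then y k else 0) = 0 := fun j => if_neg (fun h => hk j h.symm)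
    simp [this]

lemma sN_fiber {r : ℝ≥0∞} (hr : 0 < r) (N : ℕ) : ∃ C : NNReal, ∀ (κ : ℤ → ℤ) (x : ℤ → ℝ≥0∞),
    (∀ j j', κ j = κ j' → |j - j'| ≤ N) → sN r (fun j => x (κ j)) ≤ C * sN r x := by
  by_cases hr' : r = ∞
  · subst hr'
    refine ⟨1, fun κ x _ => ?_⟩
    rw [sN_top, sN_top, ENNReal.coe_one, one_mul]
    exact iSup_le fun j => le_iSup x (κ j)
  · have hp : 0 < r.toReal := ENNReal.toReal_pos hr.ne' hr'
    refine ⟨(2 * N + 1 : ℕ) ^ (r.toReal)⁻¹, fun κ x h => ?_⟩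
    rw [ENNReal.coe_rpow_of_nonneg _ (by positivity)]
    refine sN_le_of_pow hr hr' ?_
    have := tsum_fiber N κ h (fun k => x k ^ r.toReal)
    exact_mod_cast this

lemma tsum_geo_ne_top {z : ℝ} (h0 : 0 ≤ z) (h1 : z < 1) :
    ∑' l : ℤ, ENNReal.ofReal (z ^ l.natAbs) ≠ ∞ := by
  have : Summable (fun l : ℤ => z ^ l.natAbs) := by
    apply Summable.of_nat_of_neg
    · simpa using summable_geometric_of_lt_one h0 h1
    · simpa using summable_geometric_of_lt_one h0 h1
  exact this.tsum_ofReal_ne_top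

lemma sN_conv {r : ℝ≥0∞} (hr : 0 < r) {y : ℝ} (h0 : 0 < y) (h1 : y < 1) :
    ∃ C : NNReal, ∀ x : ℤ → ℝ≥0∞,
      sN r (fun l => ⨆ k : ℤ, ENNReal.ofReal (y ^ (k - l).natAbs) * x k) ≤ C * sN r x := by
  by_cases hr' : r = ∞
  · subst hr'
    refine ⟨1, fun x => ?_⟩
    rw [sN_top, sN_top, ENNReal.coe_one, one_mul]
    refine iSup_le fun l => iSup_le fun k => ?_
    refine le_trans ?_ (le_iSup x k)
    refine mul_le_of_le_one_left (zero_le) ?_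
    rw [ENNReal.ofReal_le_one]
    exact pow_le_one₀ h0.le h1.le
  · have hp : 0 < r.toReal := ENNReal.toReal_pos hr.ne' hr'
    set p := r.toReal with hpd
    have hz1 : y ^ p < 1 := Real.rpow_lt_one h0.le h1 hp
    have hz0 : 0 < y ^ p := by positivity
    have hS := tsum_geo_ne_top hz0.le hz1
    set S := ∑' l : ℤ, ENNReal.ofReal ((y ^ p) ^ l.natAbs) with hSd
    refine ⟨S.toNNReal ^ p⁻¹, fun x => ?_⟩
    rw [ENNReal.coe_rpow_of_nonneg _ (by positivity), ENNReal.coe_toNNReal hS]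
    refine sN_le_of_pow hr hr' ?_
    rw [← hpd]
    calc _ ≤ ∑' l : ℤ, ∑' k : ℤ, (ENNReal.ofReal (y ^ (k - l).natAbs) * x k) ^ p := by
          refine ENNReal.tsum_le_tsum fun l => ?_
          rw [← ENNReal.le_rpow_inv_iff hp]
          refine iSup_le fun k => ?_
          rw [ENNReal.le_rpow_inv_iff hp]
          exact ENNReal.le_tsum (f := fun k : ℤ => (ENNReal.ofReal (y ^ (k - l).natAbs) * x k) ^ p) k
      _ = ∑' k : ℤ, ∑' l : ℤ, ENNReal.ofReal ((y ^ p) ^ (k - l).natAbs) * x k ^ p := by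
          rw [ENNReal.tsum_comm]
          refine tsum_congr fun k => tsum_congr fun l => ?_
          rw [ENNReal.mul_rpow_of_nonneg _ _ hp.le, ENNReal.ofReal_rpow_of_pos (by positivity),
            ← Real.rpow_natCast, ← Real.rpow_natCast, ← Real.rpow_mul h0.le, ← Real.rpow_mul h0.le,
            mul_comm p]
      _ = ∑' k : ℤ, S * x k ^ p := by
          refine tsum_congr fun k => ?_
          rw [ENNReal.tsum_mul_right]
          congr 1
          exact (Equiv.subLeft k).tsum_eq (fun l : ℤ => ENNReal.ofReal ((y ^ p) ^ l.natAbs))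
      _ = _ := ENNReal.tsum_mul_left
/-! ### Change of variables on dyadic sequences -/

lemma RV_bdd {κ : ℝ} (hκ : 0 < κ) {ρ : ℝ → ℝ} (h : RV κ ρ) (A : ℝ) :
    ∃ N : ℕ, ∀ k k' : ℤ, ρ ((2:ℝ) ^ k) ≤ A * ρ ((2:ℝ) ^ k') → k - k' ≤ N := by
  obtain ⟨C, hC, H⟩ := h.2 (κ / 2) (by positivity)
  obtain ⟨N, hN⟩ := pow_unbounded_of_one_lt (A * C)
    (Real.one_lt_rpow one_lt_two (half_pos hκ) : (1:ℝ) < 2 ^ (κ / 2))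
  refine ⟨N, fun k k' hk => ?_⟩
  by_contra! hcon
  have hle : k' ≤ k := by omega
  have h2 : (0:ℝ) < 2 ^ k := by positivity
  have h2' : (0:ℝ) < 2 ^ k' := by positivity
  have hlt : (2:ℝ) ^ k' ≤ 2 ^ k := zpow_le_zpow_right₀ one_le_two hle
  have h3 := H _ _ h2 h2'
  rw [Rt_comm, Rt_of_le h2' hlt] at h3
  obtain ⟨n, hn⟩ : ∃ n : ℕ, k - k' = n := ⟨(k - k').toNat, by omega⟩
  have hx : (2:ℝ) ^ k / 2 ^ k' = 2 ^ n := by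
    rw [← zpow_sub₀ two_ne_zero, hn, zpow_natCast]
  have hx' : (2:ℝ) ^ k' / 2 ^ k = ((2:ℝ) ^ n)⁻¹ := by rw [← hx, inv_div]
  rw [hx, hx'] at h3
  have hρ : 0 < ρ (2 ^ k) := h.pos h2
  have hρ' : 0 < ρ (2 ^ k') := h.pos h2'
  have e : (((2:ℝ) ^ n)⁻¹) ^ κ * ((2:ℝ) ^ n) ^ (κ / 2) = (((2:ℝ) ^ (κ / 2)) ^ n)⁻¹ := by
    rw [Real.inv_rpow (by positivity), ← Real.rpow_neg (by positivity),
      ← Real.rpow_add (by positivity), ← Real.rpow_natCast, ← Real.rpow_natCast,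
      ← Real.rpow_mul (by positivity), ← Real.rpow_mul (by positivity),
      ← Real.rpow_neg (by positivity)]
    congr 1
    ring
  rw [mul_assoc C, e] at h3
  set Y := ((2:ℝ) ^ (κ / 2)) ^ n with hY
  have hYpos : 0 < Y := by positivity
  have hYN : A * C < Y := by
    refine hN.trans_le ?_
    exact pow_le_pow_right₀ (Real.one_le_rpow one_le_two (by positivity)) (by omega)
  have h4 : Y * ρ (2 ^ k') ≤ C * ρ (2 ^ k) := by
    calc Y * ρ (2 ^ k') ≤ Y * (C * Y⁻¹ * ρ (2 ^ k)) := by gcongr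
      _ = C * ρ (2 ^ k) := by field_simp
  have h5 : C * ρ (2 ^ k) ≤ A * C * ρ (2 ^ k') := by nlinarith
  have h6 : A * C * ρ (2 ^ k') < Y * ρ (2 ^ k') := by gcongr
  linarith

lemma chg_up {κ : ℝ} (hκ : 0 < κ) {ρ : ℝ → ℝ} (h : RV κ ρ) {r : ℝ≥0∞} (hr : 0 < r) (D : NNReal) :
    ∃ C : NNReal, ∀ F : ℝ → ℝ≥0∞,
    (∀ s t, 0 < s → 0 < t → s ≤ 2 * t → t ≤ 2 * s → F s ≤ D * F t) →
    sN r (fun k => F (ρ ((2:ℝ) ^ k))) ≤ C * sN r (fun k => F ((2:ℝ) ^ k)) := by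
  obtain ⟨N, hN⟩ := RV_bdd hκ h 2
  obtain ⟨C, hC⟩ := sN_fiber hr N
  have hpos : ∀ k : ℤ, 0 < ρ ((2:ℝ) ^ k) := fun k => h.pos (by positivity)
  choose l hl using fun k : ℤ => exists_mem_Ico_zpow (hpos k) (one_lt_two (α := ℝ))
  have hl2 : ∀ k, ρ ((2:ℝ) ^ k) < 2 ^ l k * 2 := fun k => by
    rw [← zpow_add_one₀ two_ne_zero]; exact (hl k).2
  refine ⟨D * C, fun F H => ?_⟩
  have h1 := hC l (fun k => F ((2:ℝ) ^ k)) (by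
    intro j j' hj
    have h1 := hl2 j
    have h2 := hl2 j'
    have h3 := (hl j).1
    have h4 := (hl j').1
    rw [← hj] at h2 h4
    rw [abs_le]
    have h5 := hN j j' (by linarith)
    have h6 := hN j' j (by linarith)
    constructor <;> linarith)
  calc _ ≤ sN r (fun k => D * F ((2:ℝ) ^ (l k))) := by
        refine sN_mono fun k => ?_
        exact H _ _ (hpos k) (by positivity) (by linarith [hl2 k]) (by linarith [(hl k).1, hpos k])
    _ = D * sN r (fun k => F ((2:ℝ) ^ (l k))) := sN_const hr _ _
    _ ≤ D * (C * sN r (fun k => F ((2:ℝ) ^ k))) := by gcongr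
    _ = _ := by push_cast; ring

lemma exists_sel {κ : ℝ} (hκ : 0 < κ) {ρ : ℝ → ℝ} (h : RV κ ρ) :
    ∃ (A : ℝ) (N : ℕ) (k : ℤ → ℤ), 1 ≤ A ∧
      (∀ j, ρ ((2:ℝ) ^ k j) ≤ 2 ^ j ∧ (2:ℝ) ^ j ≤ A * ρ ((2:ℝ) ^ k j)) ∧
      ∀ j j', k j = k j' → |j - j'| ≤ N := by
  obtain ⟨D, hD, HD⟩ := h.doubling 2 two_pos
  have hpos : ∀ k : ℤ, 0 < ρ ((2:ℝ) ^ k) := fun k => h.pos (by positivity)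
  have ex : ∀ j : ℤ, ∃ k : ℤ, ρ ((2:ℝ) ^ k) ≤ 2 ^ j ∧ (2:ℝ) ^ j ≤ (D + 1) * ρ ((2:ℝ) ^ k) := by
    intro j
    have hj : (0:ℝ) < 2 ^ j := by positivity
    obtain ⟨N1, hN1⟩ := RV_bdd hκ h (ρ ((2:ℝ) ^ (0:ℤ)) / 2 ^ j)
    obtain ⟨N2, hN2⟩ := RV_bdd hκ h (2 ^ j / ρ ((2:ℝ) ^ (0:ℤ)))
    obtain ⟨k, hk, hk'⟩ := Int.exists_greatest_of_bdd (P := fun k : ℤ => ρ ((2:ℝ) ^ k) ≤ 2 ^ j)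
      ⟨N2, fun z hz => by
        have := hN2 z 0 (by rw [div_mul_cancel₀ _ (hpos 0).ne']; exact hz)
        linarith⟩
      (by
        by_contra! hcon
        have h1 := (hcon (-N1 - 1)).le
        have := hN1 0 (-N1 - 1) (by
          rw [div_mul_eq_mul_div, le_div_iff₀ hj]
          exact mul_le_mul_of_nonneg_left h1 (hpos 0).le)
        linarith)
    refine ⟨k, hk, ?_⟩
    have h1 : (2:ℝ) ^ j < ρ ((2:ℝ) ^ (k + 1)) := by
      by_contra! hcon
      have := hk' _ hcon
      omega
    have h2 := HD ((2:ℝ) ^ k) ((2:ℝ) ^ (k + 1)) (by positivity) (by positivity)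
      (by rw [zpow_add_one₀ two_ne_zero]; linarith)
      (by rw [zpow_add_one₀ two_ne_zero]; linarith [show (0:ℝ) < 2 ^ k by positivity])
    nlinarith [hpos k]
  choose k hk using ex
  obtain ⟨N, hN⟩ := RV_bdd one_pos (RV.power 1) (D + 1)
  refine ⟨D + 1, N, k, by linarith, hk, fun j j' hj => ?_⟩
  simp only [Real.rpow_one] at hN
  have h1 := hk j
  have h2 := hk j'
  rw [hj] at h1
  have h5 := hN j j' (h1.2.trans (by gcongr; exact h2.1))
  have h6 := hN j' j (h2.2.trans (by gcongr; exact h1.1))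
  rw [abs_le]
  constructor <;> linarith

lemma Rt_pow2 (l k : ℤ) (ε : ℝ) :
    Rt ((2:ℝ) ^ l) ((2:ℝ) ^ k) ^ (-ε) = ((2:ℝ) ^ (-ε)) ^ (k - l).natAbs := by
  have hl : (0:ℝ) < 2 ^ l := by positivity
  have hk : (0:ℝ) < 2 ^ k := by positivity
  have e : Rt ((2:ℝ) ^ l) ((2:ℝ) ^ k) = 2 ^ (k - l).natAbs := by
    rw [← zpow_natCast]
    rcases le_total l k with h | h
    · rw [Rt_of_le hl (zpow_le_zpow_right₀ one_le_two h), ← zpow_sub₀ two_ne_zero]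
      congr 1
      omega
    · rw [Rt_of_ge hk (zpow_le_zpow_right₀ one_le_two h), ← zpow_sub₀ two_ne_zero]
      congr 1
      omega
  rw [e, ← Real.rpow_natCast, ← Real.rpow_natCast, ← Real.rpow_mul (by positivity),
    ← Real.rpow_mul (by positivity), mul_comm]

lemma wK_dbl {κ : ℝ} {w : ℝ → ℝ} (h : RV κ w) {A : ℝ} (hA : 1 ≤ A) :
    ∃ D : NNReal, ∀ (N₀ N₁ : E → ℝ≥0∞) (f : E) (s t : ℝ), 0 < s → 0 < t → s ≤ A * t → t ≤ A * s →
      ENNReal.ofReal (w s) * Kf N₀ N₁ s f ≤ D * (ENNReal.ofReal (w t) * Kf N₀ N₁ t f) := by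
  obtain ⟨D, hD, HD⟩ := h.doubling A (by linarith)
  refine ⟨D.toNNReal * A.toNNReal, fun N₀ N₁ f s t hs ht h1 h2 => ?_⟩
  calc _ ≤ ENNReal.ofReal (D * w t) * (ENNReal.ofReal A * Kf N₀ N₁ t f) := by
        gcongr
        · exact HD _ _ ht hs h1 h2
        · exact Kf_scale _ _ hA h1 f
    _ = _ := by
        rw [ENNReal.ofReal_mul hD.le, ENNReal.coe_mul]
        simp only [ENNReal.ofReal]
        ring
/-! ### The discrete upper estimate and the main theorem -/

lemma disc_K_upper (N₀ N₁ : E → ℝ≥0∞) {η δ : ℝ} (hδ : 0 < δ) (hη : 0 ≤ η - δ) {W w v : ℝ → ℝ}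
    (hW : RV (-η) W) (hWv : ∀ t, 0 < t → W t = v t * w t) (hv : ∀ t, 0 < t → 0 < v t)
    {Kb : ℝ → E → ℝ≥0∞} {C : NNReal}
    (HK : ∀ (f : E) (t : ℝ) (M : ℝ≥0∞), 0 < t → M ≠ ∞ →
      (∀ u, 0 < u → u ≤ t → Kf N₀ N₁ u f ≤ M * ENNReal.ofReal ((u / t) ^ (η - δ))) →
      (∀ u, 0 < u → t ≤ u → Kf N₀ N₁ u f ≤ M * ENNReal.ofReal ((u / t) ^ (η + δ))) →
      Kb t f ≤ C * ENNReal.ofReal (w t) * M) :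
    ∃ C' : NNReal, ∀ (f : E) (l : ℤ),
      ENNReal.ofReal (v ((2:ℝ) ^ l)) * Kb ((2:ℝ) ^ l) f ≤
        C' * ⨆ k : ℤ, ENNReal.ofReal (((2:ℝ) ^ (-(δ / 2))) ^ (k - l).natAbs) *
          (ENNReal.ofReal (W ((2:ℝ) ^ k)) * Kf N₀ N₁ ((2:ℝ) ^ k) f) := by
  obtain ⟨D, hD, HD⟩ := hW.2 (δ / 2) (by positivity)
  refine ⟨(2 * C + 1) * D.toNNReal, fun f l => ?_⟩
  have ht : (0:ℝ) < 2 ^ l := by positivity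
  set t := (2:ℝ) ^ l with htd
  have hWt : 0 < W t := hW.pos ht
  set m : ℤ → ℝ := fun k => ((2:ℝ) ^ k / t) ^ (-η) * Rt t ((2:ℝ) ^ k) ^ (-δ) with hm
  have hRt : ∀ k : ℤ, 0 < Rt t ((2:ℝ) ^ k) := fun k => Rt_pos ht (by positivity)
  have hmpos : ∀ k, 0 < m k := fun k =>
    mul_pos (by positivity) (Real.rpow_pos_of_pos (hRt k) _)
  set M := ⨆ k : ℤ, ENNReal.ofReal (m k) * Kf N₀ N₁ ((2:ℝ) ^ k) f with hMd
  have hMk : ∀ k : ℤ, Kf N₀ N₁ ((2:ℝ) ^ k) f ≤ M * ENNReal.ofReal (m k)⁻¹ := by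
    intro k
    calc _ = ENNReal.ofReal (m k) * Kf N₀ N₁ ((2:ℝ) ^ k) f * ENNReal.ofReal (m k)⁻¹ := by
          rw [mul_right_comm, ← ENNReal.ofReal_mul (hmpos k).le, mul_inv_cancel₀ (hmpos k).ne',
            ENNReal.ofReal_one, one_mul]
      _ ≤ _ := by
          gcongr
          exact le_iSup (fun k : ℤ => ENNReal.ofReal (m k) * Kf N₀ N₁ ((2:ℝ) ^ k) f) k
  have step1 : ENNReal.ofReal (v t) * Kb t f ≤ ((2 * C + 1 : NNReal) : ℝ≥0∞) *
      (ENNReal.ofReal (W t) * M) := by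
    by_cases hM : M = ∞
    · rw [hM, ENNReal.mul_top (ENNReal.ofReal_pos.2 hWt).ne', ENNReal.mul_top (by simp)]
      exact le_top
    · have := HK f t (2 * M) ht (ENNReal.mul_ne_top ENNReal.ofNat_ne_top hM)
        (by
          intro u hu hut
          obtain ⟨k, hk1, hk2⟩ := exists_mem_Ico_zpow hu (one_lt_two (α := ℝ))
          rw [zpow_add_one₀ two_ne_zero] at hk2
          have h2k : (0:ℝ) < 2 ^ k := by positivity
          refine (Kf_dbl N₀ N₁ f (show u ≤ 2 * 2 ^ k by linarith)).trans ?_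
          rw [mul_assoc]
          gcongr
          refine (hMk k).trans ?_
          gcongr
          rw [hm]
          simp only
          rw [Rt_of_ge h2k (hk1.trans hut), mul_inv, ← Real.rpow_neg (by positivity),
            ← Real.rpow_neg (by positivity), ← inv_div ((2:ℝ) ^ k) t,
            Real.inv_rpow (by positivity), ← Real.rpow_neg (by positivity),
            ← Real.rpow_add (by positivity), show - -η + - - -δ = η - δ by ring]
          gcongr)
        (by
          intro u hu hut
          obtain ⟨k, hk1, hk2⟩ := exists_mem_Ico_zpow hu (one_lt_two (α := ℝ))
          have hlk : l ≤ k := by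
            have : (2:ℝ) ^ l < 2 ^ (k + 1) := hut.trans_lt hk2
            have := (zpow_lt_zpow_iff_right₀ (one_lt_two (α := ℝ))).1 this
            omega
          rw [zpow_add_one₀ two_ne_zero] at hk2
          have h2k : (0:ℝ) < 2 ^ k := by positivity
          refine (Kf_dbl N₀ N₁ f (show u ≤ 2 * 2 ^ k by linarith)).trans ?_
          rw [mul_assoc]
          gcongr
          refine (hMk k).trans ?_
          gcongr
          rw [hm]
          simp only
          rw [Rt_of_le ht (zpow_le_zpow_right₀ one_le_two hlk), mul_inv,
            ← Real.rpow_neg (by positivity), ← Real.rpow_neg (by positivity),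
            ← Real.rpow_add (by positivity), show - -η + - -δ = η + δ by ring]
          gcongr
          linarith)
      calc _ ≤ ENNReal.ofReal (v t) * (C * ENNReal.ofReal (w t) * (2 * M)) := by gcongr
        _ = (2 * C : NNReal) * (ENNReal.ofReal (W t) * M) := by
            rw [hWv t ht, ENNReal.ofReal_mul (hv t ht).le]
            push_cast
            ring
        _ ≤ _ := by
            gcongr
            exact le_self_add
  refine step1.trans ?_
  rw [ENNReal.coe_mul, mul_assoc, hMd]
  refine mul_le_mul_right ?_ _
  rw [ENNReal.mul_iSup]
  refine iSup_le fun k => le_trans ?_ (mul_le_mul_right (le_iSup _ k) _)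
  have h2k : (0:ℝ) < 2 ^ k := by positivity
  rw [← mul_assoc, ← mul_assoc, ← mul_assoc]
  refine mul_le_mul_left ?_ _
  rw [← ENNReal.ofReal_mul hWt.le,
    show ((D.toNNReal : NNReal) : ℝ≥0∞) = ENNReal.ofReal D from rfl,
    ← ENNReal.ofReal_mul hD.le, ← ENNReal.ofReal_mul (by positivity)]
  apply ENNReal.ofReal_le_ofReal
  rw [← Rt_pow2, ← htd]
  have h1 := HD _ _ h2k ht
  rw [Rt_comm] at h1
  calc W t * m k ≤ (D * (t / 2 ^ k) ^ (-η) * Rt t (2 ^ k) ^ (δ / 2) * W (2 ^ k)) * m k := by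
        gcongr
        exact (hmpos k).le
    _ = D * ((t / 2 ^ k) ^ (-η) * (2 ^ k / t) ^ (-η)) *
        (Rt t (2 ^ k) ^ (δ / 2) * Rt t (2 ^ k) ^ (-δ)) * W (2 ^ k) := by
        rw [hm]; ring
    _ = _ := by
        rw [← Real.mul_rpow (by positivity) (by positivity), ← Real.rpow_add (hRt k),
          show t / 2 ^ k * (2 ^ k / t) = 1 by field_simp, Real.one_rpow,
          show δ / 2 + -δ = -(δ / 2) by ring]
        ring

theorem theorem26
    (A₀ A₁ : QuasiBanach E)
    (hne : ∃ x : E, x ≠ 0 ∧ A₀.N x ≠ ∞ ∧ A₁.N x ≠ ∞)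
    (θ₀ θ₁ θ : ℝ) (hθ₀ : 0 < θ₀) (hθ₀₁ : θ₀ < θ₁) (hθ₁ : θ₁ < 1) (hθ : 0 < θ) (hθ' : θ < 1)
    (r r₀ r₁ q₀ q₁ : ℝ≥0∞) (hr : 0 < r) (hr₀ : 0 < r₀) (hr₁ : 0 < r₁) (hq₀ : 0 < q₀) (hq₁ : 0 < q₁)
    (a a₀ a₁ b₀ b₁ : ℝ → ℝ)
    (h_sv_a : SlowlyVarying a)
    (h_sv_a₀ : SlowlyVarying a₀)
    (h_sv_a₁ : SlowlyVarying a₁)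
    (h_sv_b₀ : SlowlyVarying b₀)
    (h_sv_b₁ : SlowlyVarying b₁)
    (hfin₀ : LqNorm r₀ (Ioi 1) (svWgt r₀ (fun s => b₀ s / a₀ s)) ≠ ∞)
    (hfin₁ : LqNorm r₁ (Ioo 0 1) (svWgt r₁ (fun s => b₁ s / a₁ s)) ≠ ∞)
    (c₀ c₁ ρ : ℝ → ℝ)
    (hc₀ : ∀ t, c₀ t = a₀ t * (LqNorm r₀ (Ioi t) (svWgt r₀ (fun s => b₀ s / a₀ s))).toReal)
    (hc₁ : ∀ t, c₁ t = a₁ t * (LqNorm r₁ (Ioo 0 t) (svWgt r₁ (fun s => b₁ s / a₁ s))).toReal)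
    (hρ : ∀ t, ρ t = t ^ (θ₁ - θ₀) * (c₀ t / c₁ t)) :
    EquivNorms
      (normK (normL A₀.N A₁.N θ₀ r₀ q₀ b₀ a₀) (normR A₀.N A₁.N θ₁ r₁ q₁ b₁ a₁) θ r a)
      (normK A₀.N A₁.N ((1 - θ) * θ₀ + θ * θ₁) r
        (fun t => c₀ t ^ (1 - θ) * c₁ t ^ θ * a (ρ t))) := by
  have Ra := RV.of_sv h_sv_a
  have Ra₀ := RV.of_sv h_sv_a₀
  have Ra₁ := RV.of_sv h_sv_a₁
  have Rβ₀ : RV 0 (fun t => b₀ t / a₀ t) := ((RV.of_sv h_sv_b₀).div Ra₀).cast (by ring)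
  have Rβ₁ : RV 0 (fun t => b₁ t / a₁ t) := ((RV.of_sv h_sv_b₁).div Ra₁).cast (by ring)
  have eB₀ : ∀ t, 0 < t → LqNorm r₀ (Ioi t) (svWgt r₀ (fun s => b₀ s / a₀ s)) =
      Bn true r₀ (fun s => b₀ s / a₀ s) t := by
    intro t ht
    rw [LqNorm_svWgt measurableSet_Ioi (fun u hu => ht.trans hu)]
    simp [Bn, Iv]
  have eB₁ : ∀ t, 0 < t → LqNorm r₁ (Ioo 0 t) (svWgt r₁ (fun s => b₁ s / a₁ s)) =
      Bn false r₁ (fun s => b₁ s / a₁ s) t := by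
    intro t ht
    rw [LqNorm_svWgt measurableSet_Ioo (fun u hu => hu.1)]
    simp [Bn, Iv]
  rw [eB₀ 1 one_pos] at hfin₀
  rw [eB₁ 1 one_pos] at hfin₁
  have Rc₀ : RV 0 c₀ := ((Ra₀.mul (Bn_RV true hr₀ Rβ₀ hfin₀)).cast (by ring)).congr
    (fun t ht => by rw [hc₀, eB₀ t ht])
  have Rc₁ : RV 0 c₁ := ((Ra₁.mul (Bn_RV false hr₁ Rβ₁ hfin₁)).cast (by ring)).congr
    (fun t ht => by rw [hc₁, eB₁ t ht])
  have Rρ : RV (θ₁ - θ₀) ρ := (((RV.power (θ₁ - θ₀)).mul (Rc₀.div Rc₁)).cast (by ring)).congr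
    (fun t ht => hρ t)
  have ec₀ : ∀ t, 0 < t → ENNReal.ofReal (c₀ t) =
      ENNReal.ofReal (a₀ t) * Bn true r₀ (fun t => b₀ t / a₀ t) t := by
    intro t ht
    rw [hc₀, eB₀ t ht, ENNReal.ofReal_mul (Ra₀.pos ht).le,
      ENNReal.ofReal_toReal (Bn_fin true hr₀ Rβ₀ hfin₀ ht)]
  have ec₁ : ∀ t, 0 < t → ENNReal.ofReal (c₁ t) =
      ENNReal.ofReal (a₁ t) * Bn false r₁ (fun t => b₁ t / a₁ t) t := by
    intro t ht
    rw [hc₁, eB₁ t ht, ENNReal.ofReal_mul (Ra₁.pos ht).le,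
      ENNReal.ofReal_toReal (Bn_fin false hr₁ Rβ₁ hfin₁ ht)]
  have hρ0 : ∀ t, 0 < t → 0 < ρ t := fun t ht => Rρ.pos ht
  have hρ' : ∀ t, 0 < t → t ^ (-θ₀) * c₀ t = ρ t * (t ^ (-θ₁) * c₁ t) := by
    intro t ht
    have h1 := Rc₁.pos ht
    have e : t ^ (-θ₀) = t ^ (θ₁ - θ₀) * t ^ (-θ₁) := by
      rw [← Real.rpow_add ht]; congr 1; ring
    rw [hρ, e]
    field_simp
  set η := (1 - θ) * θ₀ + θ * θ₁ with hη
  set W : ℝ → ℝ := fun t => t ^ (-η) * (c₀ t ^ (1 - θ) * c₁ t ^ θ * a (ρ t)) with hWd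
  have RW : RV (-η) W := by
    refine ((RV.power (-η)).mul
      (((Rc₀.rpow_nonneg (p := 1 - θ) (by linarith)).mul (Rc₁.rpow_nonneg hθ)).mul
        (Ra.comp Rρ))).cast (by ring)
  set v : ℝ → ℝ := fun t => (ρ t) ^ (-θ) * a (ρ t) with hvd
  have hv : ∀ t, 0 < t → 0 < v t := fun t ht =>
    mul_pos (Real.rpow_pos_of_pos (hρ0 t ht) _) (Ra.pos (hρ0 t ht))
  have hWv : ∀ t, 0 < t → W t = v t * (t ^ (-θ₀) * c₀ t) := by
    intro t ht
    have h0 := Rc₀.pos ht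
    have h1 := Rc₁.pos ht
    have e1 : (ρ t) ^ (-θ) = t ^ (-(θ * (θ₁ - θ₀))) * (c₀ t ^ (-θ) * c₁ t ^ θ) := by
      rw [hρ, Real.mul_rpow (by positivity) (by positivity), Real.div_rpow h0.le h1.le,
        ← Real.rpow_mul ht.le, Real.rpow_neg h1.le, div_inv_eq_mul]
      congr 2
      ring
    have e2 : c₀ t ^ (1 - θ) = c₀ t ^ (-θ) * c₀ t := by
      rw [show 1 - θ = -θ + 1 by ring, Real.rpow_add h0, Real.rpow_one]
    have e3 : t ^ (-η) = t ^ (-(θ * (θ₁ - θ₀))) * t ^ (-θ₀) := by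
      rw [← Real.rpow_add ht]
      congr 1
      rw [hη]
      ring
    simp only [hWd, hvd]
    rw [e1, e2, e3]
    ring
  have RwF : RV (-θ) (fun s => s ^ (-θ) * a s) := ((RV.power (-θ)).mul Ra).cast (by ring)
  have hη0 : θ₀ < η := by nlinarith
  have hη1 : η < θ₁ := by nlinarith
  obtain ⟨δ, hδ, hδ0, hδ1⟩ : ∃ δ : ℝ, 0 < δ ∧ θ₀ < η - δ ∧ η + δ < θ₁ := by
    refine ⟨min (η - θ₀) (θ₁ - η) / 2, ?_, ?_, ?_⟩
    · have : 0 < min (η - θ₀) (θ₁ - η) := lt_min (by linarith) (by linarith)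
      linarith
    · have := min_le_left (η - θ₀) (θ₁ - η)
      linarith
    · have := min_le_right (η - θ₀) (θ₁ - η)
      linarith
  obtain ⟨CL, HL⟩ := K_lower A₀ A₁ θ₀ θ₁ hr₀ hr₁ hq₀ hq₁ Ra₀ Ra₁ ec₀ ec₁ hρ0 hρ'
  obtain ⟨CU, HU⟩ := K_upper A₀ A₁ (p := η - δ) (p' := η + δ) hθ₀ hθ₁ hδ0 (by linarith)
    (by linarith) hδ1 hr₀ hr₁ hq₀ hq₁ Ra₀ Ra₁ Rβ₀ Rβ₁ ec₀ ec₁ hρ0 hρ'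
  set NL := normL A₀.N A₁.N θ₀ r₀ q₀ b₀ a₀
  set NR := normR A₀.N A₁.N θ₁ r₁ q₁ b₁ a₁
  obtain ⟨CV, HV⟩ := disc_K_upper A₀.N A₁.N hδ (by linarith) RW hWv hv
    (Kb := fun t f => Kf NL NR (ρ t) f) HU
  obtain ⟨DF, HDF⟩ := wK_dbl (E := E) RwF one_le_two
  obtain ⟨DG, HDG⟩ := wK_dbl (E := E) RW one_le_two
  have hκ : 0 < θ₁ - θ₀ := by linarith
  obtain ⟨Cu, Hu⟩ := chg_up hκ Rρ hr DF
  obtain ⟨A, N, k, hA, hk, hfib⟩ := exists_sel hκ Rρ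
  obtain ⟨DA, HDA⟩ := wK_dbl (E := E) RwF hA
  obtain ⟨Cf, Hf⟩ := sN_fiber hr N
  obtain ⟨Cc, Hc⟩ := sN_conv hr (y := (2:ℝ) ^ (-(δ / 2))) (by positivity)
    (Real.rpow_lt_one_of_one_lt_of_neg one_lt_two (by linarith))
  obtain ⟨dF, HdF⟩ := disc_lower hr DF
  obtain ⟨dG, HdG⟩ := disc_lower hr DG
  -- the two discretized sides
  have side1 : ∀ f, normK A₀.N A₁.N η r (fun t => c₀ t ^ (1 - θ) * c₁ t ^ θ * a (ρ t)) f ≤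
      (DG * CL * Cu * dF : NNReal) * normK NL NR θ r a f := by
    intro f
    rw [normK_eq, normK_eq]
    set F : ℝ → ℝ≥0∞ := fun s => ENNReal.ofReal (s ^ (-θ) * a s) * Kf NL NR s f with hF
    calc _ ≤ DG * sN r (fun k => ENNReal.ofReal (W ((2:ℝ) ^ k)) * Kf A₀.N A₁.N ((2:ℝ) ^ k) f) :=
          disc_upper hr (fun s t hs ht h1 h2 => HDG A₀.N A₁.N f s t hs ht h1 h2)
      _ ≤ DG * sN r (fun k => CL * F (ρ ((2:ℝ) ^ k))) := by
          gcongr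
          refine sN_mono fun k => ?_
          have h2 : (0:ℝ) < 2 ^ k := by positivity
          rw [hWv _ h2, ENNReal.ofReal_mul (hv _ h2).le, mul_assoc]
          refine (mul_le_mul_right (HL _ f h2) _).trans (le_of_eq ?_)
          simp only [hF, hvd]
          ring
      _ = DG * (CL * sN r (fun k => F (ρ ((2:ℝ) ^ k)))) := by rw [sN_const hr]
      _ ≤ DG * (CL * (Cu * sN r (fun k => F ((2:ℝ) ^ k)))) := by
          gcongr
          exact Hu F (fun s t hs ht h1 h2 => HDF NL NR f s t hs ht h1 h2)
      _ ≤ DG * (CL * (Cu * (dF * Lst r (Ioi 0) F))) := by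
          gcongr
          exact HdF F (fun s t hs ht h1 h2 => HDF NL NR f s t hs ht h1 h2)
      _ = _ := by push_cast; ring
  have side2 : ∀ f, normK NL NR θ r a f ≤ (DF * DA * CV * Cf * Cc * dG : NNReal) *
      normK A₀.N A₁.N η r (fun t => c₀ t ^ (1 - θ) * c₁ t ^ θ * a (ρ t)) f := by
    intro f
    rw [normK_eq, normK_eq]
    set F : ℝ → ℝ≥0∞ := fun s => ENNReal.ofReal (s ^ (-θ) * a s) * Kf NL NR s f with hF
    set G : ℝ → ℝ≥0∞ := fun s => ENNReal.ofReal (W s) * Kf A₀.N A₁.N s f with hG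
    set Y : ℤ → ℝ≥0∞ := fun l => ⨆ k : ℤ,
      ENNReal.ofReal (((2:ℝ) ^ (-(δ / 2))) ^ (k - l).natAbs) * G ((2:ℝ) ^ k) with hY
    calc _ ≤ DF * sN r (fun j => F ((2:ℝ) ^ j)) :=
          disc_upper hr (fun s t hs ht h1 h2 => HDF NL NR f s t hs ht h1 h2)
      _ ≤ DF * sN r (fun j => DA * (CV * Y (k j))) := by
          gcongr
          refine sN_mono fun j => ?_
          have hj : (0:ℝ) < 2 ^ j := by positivity
          have hp : 0 < ρ ((2:ℝ) ^ k j) := hρ0 _ (by positivity)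
          refine (HDA NL NR f _ _ hj hp (hk j).2 ((hk j).1.trans (le_mul_of_one_le_left hj.le hA))).trans ?_
          refine mul_le_mul_right ?_ _
          exact HV f (k j)
      _ = DF * (DA * (CV * sN r (fun j => Y (k j)))) := by rw [sN_const hr, sN_const hr]
      _ ≤ DF * (DA * (CV * (Cf * sN r Y))) := by
          gcongr
          exact Hf k Y hfib
      _ ≤ DF * (DA * (CV * (Cf * (Cc * sN r (fun k => G ((2:ℝ) ^ k)))))) := by
          gcongr
          exact Hc (fun k => G ((2:ℝ) ^ k))
      _ ≤ DF * (DA * (CV * (Cf * (Cc * (dG * Lst r (Ioi 0) G))))) := by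
          gcongr
          exact HdG G (fun s t hs ht h1 h2 => HDG A₀.N A₁.N f s t hs ht h1 h2)
      _ = _ := by push_cast; ring
  set C1 := DG * CL * Cu * dF
  set C2 := DF * DA * CV * Cf * Cc * dG
  have hC0 : ((C1 + C2 + 1 : NNReal) : ℝ≥0∞) ≠ 0 := by simp
  refine ⟨(C1 + C2 + 1 : NNReal), pos_iff_ne_zero.2 hC0, ENNReal.coe_ne_top, fun f => ⟨?_, ?_⟩⟩
  · rw [ENNReal.inv_mul_le_iff hC0 ENNReal.coe_ne_top]
    refine (side1 f).trans ?_
    gcongr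
    rw [add_assoc]
    exact le_self_add
  · refine (side2 f).trans ?_
    gcongr
    rw [add_right_comm]
    exact le_add_self

end
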